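/- arXiv:2404.14972 — 2 statements merged into one kernel-verified Lean document; each statement's English description precedes it below -/
import Mathlib

section
/- Let H be a Hamiltonian pattern of size k (i.e. a graph on [k] which, after relabelling vertices, contains the Hamiltonian cycle with edges (1,2),(2,3),…,(k−1,k),(k,1)), let ⋆ ∈ {ind, sub}, and assume k > 2/(3−τ) and k is odd. Then the vector with α_i = 1/2 for all i and β_{ij} = 0 for all i < j is an optimal solution of the corresponding optimization problem, and there exists a constant I_N^⋆(H) ∈ (0,∞), depending on the parameters of the GIRG, such that N^⋆(H)/n^{k(3−τ)/2} converges in probability to I_N^⋆(H) as n → ∞. -/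
open MeasureTheory Filter Finset

noncomputable section

instance : Fact ((0:ℝ) < 1) := ⟨one_pos⟩

/-- The `d`-dimensional torus `ℝ^d/ℤ^d`, with the sup of coordinatewise circle distances. -/
abbrev Torus (d : ℕ) := Fin d → AddCircle (1 : ℝ)

/-- Sample space of the GIRG on `n` vertices: weights, positions, and iid uniform
`[0,1]` coins deciding the presence of each potential edge. -/
abbrev GirgΩ (d n : ℕ) := (Fin n → ℝ) × (Fin n → Torus d) × (Sym2 (Fin n) → ℝ)

/-- The law of the randomness of the GIRG: iid weights with law `μW`, iid uniform positions
on the torus, iid uniform coins. -/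
def girgMeasure (μW : Measure ℝ) (d n : ℕ) : Measure (GirgΩ d n) :=
  (Measure.pi fun _ : Fin n => μW).prod
    ((Measure.pi fun _ : Fin n => (volume : Measure (Torus d))).prod
      (Measure.pi fun _ : Sym2 (Fin n) => volume.restrict (Set.Icc (0:ℝ) 1)))

/-- mean `μ = E[W]` of the weight distribution -/
def wMean (μW : Measure ℝ) : ℝ := ∫ x, x ∂μW

/-- Power-law tail assumption: `W ≥ 1` a.s. and `P(W > x) = c x^{1-τ} (1+o(1))` as `x → ∞`. -/
def WeightTail (τ c : ℝ) (μW : Measure ℝ) : Prop :=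
  0 < c ∧ μW (Set.Iio 1) = 0 ∧
    Tendsto (fun x : ℝ => (μW (Set.Ioi x)).toReal / (c * x ^ (1 - τ))) atTop (nhds 1)

/-- GIRG connection probability `min(1, (w_u w_v / (n μ ‖x_u - x_v‖^d))^γ)`. -/
def connProb (γ μbar : ℝ) (d n : ℕ) (w : Fin n → ℝ) (x : Fin n → Torus d)
    (u v : Fin n) : ℝ :=
  min 1 ((w u * w v / ((n : ℝ) * μbar * dist (x u) (x v) ^ d)) ^ γ)

/-- `u` and `v` are joined by an edge of the GIRG in outcome `ω`. -/
def girgEdge (γ μbar : ℝ) (d n : ℕ) (ω : GirgΩ d n) (u v : Fin n) : Prop :=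
  u ≠ v ∧ ω.2.2 s(u, v) ≤ connProb γ μbar d n ω.1 ω.2.1 u v

/-- the window `[ε t, t/ε]` -/
def windowIcc (ε t : ℝ) : Set ℝ := Set.Icc (ε * t) (t / ε)

/-- The set `M_ε^{(α,β)}` of ordered `k`-tuples of distinct vertices with prescribed
weights and inter-distances. -/
def Mset {k : ℕ} (ε : ℝ) (α : Fin k → ℝ) (β : Fin k → Fin k → ℝ) (d n : ℕ)
    (w : Fin n → ℝ) (x : Fin n → Torus d) : Set (Fin k → Fin n) :=
  {v | Function.Injective v ∧
    (∀ i, w (v i) ∈ windowIcc ε ((n : ℝ) ^ (α i))) ∧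
    (∀ i j : Fin k, i < j → dist (x (v i)) (x (v j)) ∈ windowIcc ε ((n : ℝ) ^ (β i j)))}

/-- `N^{sub}(H; M_ε^{(α,β)})` -/
def nSubM {k : ℕ} (H : SimpleGraph (Fin k)) (γ μbar ε : ℝ) (α : Fin k → ℝ)
    (β : Fin k → Fin k → ℝ) (d n : ℕ) (ω : GirgΩ d n) : ℕ :=
  Set.ncard {v : Fin k → Fin n | v ∈ Mset ε α β d n ω.1 ω.2.1 ∧
    ∀ i j : Fin k, H.Adj i j → girgEdge γ μbar d n ω (v i) (v j)}

/-- `N^{ind}(H; M_ε^{(α,β)})` -/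
def nIndM {k : ℕ} (H : SimpleGraph (Fin k)) (γ μbar ε : ℝ) (α : Fin k → ℝ)
    (β : Fin k → Fin k → ℝ) (d n : ℕ) (ω : GirgΩ d n) : ℕ :=
  Set.ncard {v : Fin k → Fin n | v ∈ Mset ε α β d n ω.1 ω.2.1 ∧
    ∀ i j : Fin k, i ≠ j → (H.Adj i j ↔ girgEdge γ μbar d n ω (v i) (v j))}

/-- `N^{sub}(H)` -/
def nSubTotal {k : ℕ} (H : SimpleGraph (Fin k)) (γ μbar : ℝ) (d n : ℕ)
    (ω : GirgΩ d n) : ℕ :=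
  Set.ncard {v : Fin k → Fin n | Function.Injective v ∧
    ∀ i j : Fin k, H.Adj i j → girgEdge γ μbar d n ω (v i) (v j)}

/-- `N^{ind}(H)` -/
def nIndTotal {k : ℕ} (H : SimpleGraph (Fin k)) (γ μbar : ℝ) (d n : ℕ)
    (ω : GirgΩ d n) : ℕ :=
  Set.ncard {v : Fin k → Fin n | Function.Injective v ∧
    ∀ i j : Fin k, i ≠ j → (H.Adj i j ↔ girgEdge γ μbar d n ω (v i) (v j))}

/-- `β` read as a symmetric matrix (only entries with `i < j` are meaningful). -/
def bsym {k : ℕ} (β : Fin k → Fin k → ℝ) (i j : Fin k) : ℝ := if i < j then β i j else β j i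

/-- The feasible region `F`. -/
def Feasible (τ : ℝ) (d : ℕ) {k : ℕ} (α : Fin k → ℝ) (β : Fin k → Fin k → ℝ) : Prop :=
  (∀ i, α i ∈ Set.Icc (0 : ℝ) (1 / (τ - 1))) ∧
  (∀ i j : Fin k, i < j → β i j ∈ Set.Icc (-(1 / (d : ℝ))) 0) ∧
  (∀ i j s : Fin k, i < j → s ≠ i → s ≠ j → β i j ≤ max (bsym β i s) (bsym β j s))

/-- `min_{i<j} β_{ij}` (with value `0 = sInf ∅` for the first vertex `j`,
which does not contribute). -/
def minBeta {k : ℕ} (β : Fin k → Fin k → ℝ) (j : Fin k) : ℝ :=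
  sInf {x : ℝ | ∃ i, i < j ∧ x = β i j}

open scoped Classical in
/-- The exponent `f_H(α,β)`. -/
def fExp (τ γ : ℝ) (d : ℕ) {k : ℕ} (H : SimpleGraph (Fin k))
    (α : Fin k → ℝ) (β : Fin k → Fin k → ℝ) : ℝ :=
  (k : ℝ) + (1 - τ) * ∑ i, α i + (d : ℝ) * ∑ j, minBeta β j +
    γ * ∑ p ∈ Finset.univ.filter (fun p : Fin k × Fin k => p.1 < p.2 ∧ H.Adj p.1 p.2),
        min (α p.1 + α p.2 - (d : ℝ) * β p.1 p.2 - 1) 0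

/-- Extra constraints for the induced optimization problem:
`α_i + α_j ≤ 1 + d β_{ij}` for all non-edges. -/
def IndConstr (d : ℕ) {k : ℕ} (H : SimpleGraph (Fin k)) (α : Fin k → ℝ)
    (β : Fin k → Fin k → ℝ) : Prop :=
  ∀ i j : Fin k, i < j → ¬H.Adj i j → α i + α j ≤ 1 + (d : ℝ) * β i j

/-- `(α,β)` is an optimal solution of the general optimization problem. -/
def IsOptimalSub (τ γ : ℝ) (d : ℕ) {k : ℕ} (H : SimpleGraph (Fin k))
    (α : Fin k → ℝ) (β : Fin k → Fin k → ℝ) : Prop :=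
  Feasible τ d α β ∧
    ∀ α' β', Feasible τ d α' β' → fExp τ γ d H α' β' ≤ fExp τ γ d H α β

/-- `(α,β)` is an optimal solution of the induced optimization problem. -/
def IsOptimalInd (τ γ : ℝ) (d : ℕ) {k : ℕ} (H : SimpleGraph (Fin k))
    (α : Fin k → ℝ) (β : Fin k → Fin k → ℝ) : Prop :=
  Feasible τ d α β ∧ IndConstr d H α β ∧
    ∀ α' β', Feasible τ d α' β' → IndConstr d H α' β' →
      fExp τ γ d H α' β' ≤ fExp τ γ d H α β

/-- the two kinds of subgraph counts -/
inductive StarKind | ind | sub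

/-- `N^⋆(H; M_ε^{(α,β)})` -/
def starNM (s : StarKind) {k : ℕ} (H : SimpleGraph (Fin k)) (γ μbar ε : ℝ) (α : Fin k → ℝ)
    (β : Fin k → Fin k → ℝ) (d n : ℕ) (ω : GirgΩ d n) : ℕ :=
  match s with
  | .sub => nSubM H γ μbar ε α β d n ω
  | .ind => nIndM H γ μbar ε α β d n ω

/-- `N^⋆(H)` -/
def starNTotal (s : StarKind) {k : ℕ} (H : SimpleGraph (Fin k)) (γ μbar : ℝ) (d n : ℕ)
    (ω : GirgΩ d n) : ℕ :=
  match s with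
  | .sub => nSubTotal H γ μbar d n ω
  | .ind => nIndTotal H γ μbar d n ω

/-- optimality in the optimization problem corresponding to `⋆` -/
def starIsOptimal (s : StarKind) (τ γ : ℝ) (d : ℕ) {k : ℕ} (H : SimpleGraph (Fin k))
    (α : Fin k → ℝ) (β : Fin k → Fin k → ℝ) : Prop :=
  match s with
  | .sub => IsOptimalSub τ γ d H α β
  | .ind => IsOptimalInd τ γ d H α β

/-- the optimal value `f_H^*` of the optimization problem corresponding to `⋆` -/
def starOptVal (s : StarKind) (τ γ : ℝ) (d : ℕ) {k : ℕ} (H : SimpleGraph (Fin k)) : ℝ :=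
  match s with
  | .sub => sSup {x | ∃ α β, Feasible τ d α β ∧ x = fExp τ γ d H α β}
  | .ind => sSup {x | ∃ α β, Feasible τ d α β ∧ IndConstr d H α β ∧ x = fExp τ γ d H α β}

/-- `(α,β)` is the unique optimal solution (in the `α`-variables and the
`β`-variables with `i < j`). -/
def UniquelyOptimal (s : StarKind) (τ γ : ℝ) (d : ℕ) {k : ℕ} (H : SimpleGraph (Fin k))
    (α : Fin k → ℝ) (β : Fin k → Fin k → ℝ) : Prop :=
  starIsOptimal s τ γ d H α β ∧
    ∀ α' β', starIsOptimal s τ γ d H α' β' →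
      α' = α ∧ ∀ i j : Fin k, i < j → β' i j = β i j


/-- `H` is a Hamiltonian pattern: after relabelling the vertices it contains the
Hamiltonian cycle `(1,2),(2,3),…,(k-1,k),(k,1)`. -/
def IsHamiltonianPattern {k : ℕ} [NeZero k] (H : SimpleGraph (Fin k)) : Prop :=
  ∃ σ : Equiv.Perm (Fin k), ∀ i : Fin k, H.Adj (σ i) (σ (i + 1))

/-
Take vertex weights of order `√n` and distances of order one. Every edge then has probability of
constant order, and there are `n ^ (k (3 - τ) / 2)` tuples of such vertices up to a constant.
This is optimal because a Hamiltonian cycle meets every vertex exactly twice: charging the cycle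
edges at the rate `(τ - 1) / 2 ≤ γ` cancels the weights, and by the ultrametric inequality the
spatial terms are at most `(τ - 1) / 2` times the nonpositive sum of `β` along the cycle, as soon
as `k (3 - τ) ≥ 2`.

For the first moment, write a weight as a quantile of `W`, as a function of the logarithm of its
tail probability. Shifted by the logarithm of `n ^ ((τ - 1) / 2)`, these coordinates have
intensity `e^v dv`, and the weights divided by `√n` converge to `(c e ^ (-v)) ^ (1 / (τ - 1))`.
The pattern probability converges pointwise and is dominated by the product of the connection
probabilities along the cycle. Averaging over the `k` ways to break the cycle open bounds the
spatial integral of this product by `∏ᵢ min(1, C e ^ (-(vᵢ + vᵢ₊₁) / (τ - 1))) ^ ((k - 1) / k)`,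
up to relabelling. For odd `k` the map `v ↦ (vᵢ + vᵢ₊₁)ᵢ` is invertible, so the integral splits
into one-dimensional ones, which are finite exactly when `k (3 - τ) > 2`.

For concentration, only the copies whose weights all exceed `n ^ (1 / 2 - κ)` are considered.
They carry the whole first moment asymptotically, so the remaining ones are removed by Markov's
inequality. For small `κ` there are so few vertices of such weights that the overlapping pairs of
tuples are negligible in the second moment, and Chebyshev's inequality applies.
-/

section Optimization

variable {V : Type*}

/-- The total weight `y a₁ a₂ + y a₂ a₃ + ⋯` of the path visiting the vertices of a list in
order. -/
def pathWeight (y : V → V → ℝ) : List V → ℝ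
  | [] => 0
  | [_] => 0
  | a :: b :: l => y a b + pathWeight y (b :: l)

lemma pathWeight_ofFn (y : V → V → ℝ) {m : ℕ} (g : Fin (m + 1) → V) :
    pathWeight y (List.ofFn g) = ∑ j : Fin m, y (g j.castSucc) (g j.succ) := by
  induction m with
  | zero => simp [pathWeight]
  | succ m ih =>
    have ih' := ih fun i => g i.succ
    rw [List.ofFn_succ] at ih'
    rw [List.ofFn_succ, List.ofFn_succ, pathWeight, ih', Fin.sum_univ_succ]
    rfl

lemma pathWeight_remove_add_le {y : V → V → ℝ} (hsymm : ∀ i j, y i j = y j i)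
    (hultra : ∀ i j s, i ≠ j → s ≠ i → s ≠ j → y i j ≤ max (y i s) (y j s))
    {x : V} {m : ℝ} (hm : m ≤ 0) {l₁ l₂ : List V} (hnodup : (l₁ ++ x :: l₂).Nodup)
    (hmy : ∀ z ∈ l₁ ++ l₂, m ≤ y x z) :
    pathWeight y (l₁ ++ l₂) + m ≤ pathWeight y (l₁ ++ x :: l₂) := by
  induction l₁ with
  | nil =>
    cases l₂ with
    | nil => simpa [pathWeight] using hm
    | cons b l₂ =>
      have hb := hmy b (by simp)
      simp only [List.nil_append, pathWeight]
      linarith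
  | cons a l₁ ih =>
    cases l₁ with
    | nil =>
      have ha : m ≤ y a x := hsymm x a ▸ hmy a (by simp)
      cases l₂ with
      | nil => simpa [pathWeight] using ha
      | cons b l₂ =>
        have hb := hmy b (by simp)
        simp only [List.cons_append, List.nil_append, pathWeight]
        simp only [List.cons_append, List.nil_append, List.nodup_cons, List.mem_cons,
          not_or] at hnodup
        have hab := hultra a b x hnodup.1.2.1 (Ne.symm hnodup.1.1) hnodup.2.1.1
        rw [hsymm b x] at hab
        rcases le_max_iff.1 hab with h | h <;> linarith
    | cons b l₁ =>
      simp only [List.cons_append, pathWeight] at ih hnodup ⊢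
      have := ih hnodup.of_cons fun z hz => hmy z (List.mem_cons_of_mem a hz)
      linarith

/- Deleting the largest vertex `x` of the path costs at most `M x`, by the ultrametric inequality
between its two neighbours. -/
lemma sum_map_le_pathWeight [LinearOrder V] {y : V → V → ℝ} (hsymm : ∀ i j, y i j = y j i)
    (hultra : ∀ i j s, i ≠ j → s ≠ i → s ≠ j → y i j ≤ max (y i s) (y j s))
    {M : V → ℝ} (hM : ∀ j, M j ≤ 0) (hMy : ∀ i j, i < j → M j ≤ y i j)
    {l : List V} (hl : l.Nodup) : (l.map M).sum ≤ pathWeight y l := by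
  induction hN : l.length generalizing l with
  | zero => simp [List.length_eq_zero_iff.1 hN, pathWeight]
  | succ N ih =>
    have hne : l.toFinset.Nonempty := by
      rw [List.toFinset_nonempty_iff]
      exact List.ne_nil_of_length_eq_add_one hN
    obtain ⟨x, hx, hmax⟩ := l.toFinset.exists_max_image id hne
    obtain ⟨l₁, l₂, rfl⟩ := List.append_of_mem (List.mem_toFinset.1 hx)
    have hmid : (x :: (l₁ ++ l₂)).Nodup := List.perm_middle.nodup_iff.1 hl
    have hlen : (l₁ ++ l₂).length = N := by
      simp only [List.length_append, List.length_cons] at hN ⊢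
      omega
    have hrec := ih hmid.of_cons hlen
    have hremove := pathWeight_remove_add_le hsymm hultra (hM x) hl fun z hz => by
      have hzx : z ≠ x := by
        rintro rfl
        exact (List.nodup_cons.1 hmid).1 hz
      rw [hsymm]
      refine hMy z x (lt_of_le_of_ne (hmax z ?_) hzx)
      rw [List.mem_toFinset, List.perm_middle.mem_iff]
      exact List.mem_cons_of_mem x hz
    simp only [List.map_append, List.map_cons, List.sum_append, List.sum_cons] at hrec ⊢
    linarith

/-- The rotation of `Fin (m + 1)` that moves `e` to the last place: it lists the vertices of the
cycle `0, 1, …, m, 0` in the order `e + 1, e + 2, …, e`. -/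
def rotateToLast {m : ℕ} (e : Fin (m + 1)) : Equiv.Perm (Fin (m + 1)) := Equiv.addLeft (e + 1)

lemma rotateToLast_last {m : ℕ} (e : Fin (m + 1)) : rotateToLast e (Fin.last m) = e := by
  have : (1 : Fin (m + 1)) + Fin.last m = 0 := (add_comm _ _).trans (Fin.last_add_one m)
  simp only [rotateToLast, Equiv.coe_addLeft, add_assoc, this, add_zero]

lemma rotateToLast_succ {m : ℕ} (e : Fin (m + 1)) (j : Fin m) :
    rotateToLast e j.succ = rotateToLast e j.castSucc + 1 := by
  simp only [rotateToLast, Equiv.coe_addLeft, add_assoc, Fin.coeSucc_eq_succ]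

@[to_additive]
lemma prod_rotateToLast_mul {M : Type*} [CommMonoid M] {m : ℕ} (e : Fin (m + 1))
    (f : Fin (m + 1) → M) :
    (∏ j : Fin m, f (rotateToLast e j.castSucc)) * f e = ∏ i, f i := by
  rw [← Equiv.prod_comp (rotateToLast e) f, Fin.prod_univ_castSucc, rotateToLast_last]

variable {k d : ℕ}

lemma bsym_of_lt {β : Fin k → Fin k → ℝ} {i j : Fin k} (h : i < j) : bsym β i j = β i j :=
  if_pos h

lemma bsym_comm (β : Fin k → Fin k → ℝ) (i j : Fin k) : bsym β i j = bsym β j i := by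
  rcases lt_trichotomy i j with h | rfl | h
  · simp [bsym, h, h.not_gt]
  · rfl
  · simp [bsym, h, h.not_gt]

lemma minBeta_zero (j : Fin k) : minBeta (fun _ _ : Fin k => (0 : ℝ)) j = 0 := by
  refine le_antisymm (Real.sInf_nonpos ?_) (Real.sInf_nonneg ?_) <;> rintro _ ⟨_, _, rfl⟩ <;> rfl

lemma fExp_half_zero (τ γ : ℝ) (d : ℕ) (H : SimpleGraph (Fin k)) :
    fExp τ γ d H (fun _ => 1 / 2) (fun _ _ => 0) = k * (3 - τ) / 2 := by
  simp only [fExp, minBeta_zero]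
  norm_num
  ring

lemma feasible_half_zero {τ : ℝ} (hτ : 1 < τ) (hτ' : τ ≤ 3) :
    Feasible τ d (fun _ : Fin k => 1 / 2) (fun _ _ => 0) := by
  refine ⟨fun i => ⟨by norm_num, ?_⟩, fun i j _ => ⟨?_, le_rfl⟩, fun i j s _ _ _ => ?_⟩
  · exact one_div_le_one_div_of_le (by linarith) (by linarith)
  · simp
  · simp [bsym]

section Feasible

variable {τ : ℝ} {α : Fin k → ℝ} {β : Fin k → Fin k → ℝ}

lemma Feasible.bsym_nonpos (hF : Feasible τ d α β) {i j : Fin k} (hij : i ≠ j) :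
    bsym β i j ≤ 0 := by
  rcases hij.lt_or_gt with h | h
  · exact bsym_of_lt (β := β) h ▸ (hF.2.1 i j h).2
  · rw [bsym_comm]
    exact bsym_of_lt (β := β) h ▸ (hF.2.1 j i h).2

lemma Feasible.bsym_le_max (hF : Feasible τ d α β) (i j s : Fin k) (hij : i ≠ j) (hsi : s ≠ i)
    (hsj : s ≠ j) : bsym β i j ≤ max (bsym β i s) (bsym β j s) := by
  rcases hij.lt_or_gt with h | h
  · exact bsym_of_lt (β := β) h ▸ hF.2.2 i j s h hsi hsj
  · rw [bsym_comm, max_comm]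
    exact bsym_of_lt (β := β) h ▸ hF.2.2 j i s h hsj hsi

lemma Feasible.minBeta_le (hF : Feasible τ d α β) {i j : Fin k} (hij : i < j) :
    minBeta β j ≤ β i j := by
  refine csInf_le ⟨-(1 / (d : ℝ)), ?_⟩ ⟨i, hij, rfl⟩
  rintro _ ⟨i', hi', rfl⟩
  exact (hF.2.1 i' j hi').1

lemma Feasible.minBeta_nonpos (hF : Feasible τ d α β) (j : Fin k) : minBeta β j ≤ 0 := by
  refine Real.sInf_nonpos ?_
  rintro _ ⟨i, hi, rfl⟩
  exact (hF.2.1 i j hi).2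

variable [NeZero k]

lemma Feasible.sum_minBeta_add_le (hF : Feasible τ d α β) (σ : Equiv.Perm (Fin k)) (e : Fin k) :
    ∑ j, minBeta β j + bsym β (σ e) (σ (e + 1)) ≤ ∑ i, bsym β (σ i) (σ (i + 1)) := by
  obtain ⟨m, rfl⟩ := Nat.exists_eq_add_one_of_ne_zero (NeZero.ne k)
  have hpath := sum_map_le_pathWeight (bsym_comm β) hF.bsym_le_max hF.minBeta_nonpos
    (fun i j hij => (hF.minBeta_le hij).trans_eq (bsym_of_lt hij).symm)
    (List.nodup_ofFn.2 (σ.injective.comp (rotateToLast e).injective))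
  rw [pathWeight_ofFn, List.map_ofFn, List.sum_ofFn] at hpath
  simp only [Function.comp_apply, rotateToLast_succ] at hpath
  rw [Equiv.sum_comp (rotateToLast e) fun j => minBeta β (σ j), Equiv.sum_comp σ] at hpath
  rw [← sum_rotateToLast_add e fun i => bsym β (σ i) (σ (i + 1))]
  gcongr

lemma Feasible.mul_sum_minBeta_le (hF : Feasible τ d α β) (σ : Equiv.Perm (Fin k)) :
    k * ∑ j, minBeta β j ≤ (k - 1) * ∑ i, bsym β (σ i) (σ (i + 1)) := by
  have h := Finset.sum_le_sum fun e (_ : e ∈ univ) => hF.sum_minBeta_add_le σ e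
  simp only [sum_add_distrib, sum_const, card_univ, Fintype.card_fin, nsmul_eq_mul] at h
  linarith

end Feasible

section Cycle

variable [NeZero k] (σ : Equiv.Perm (Fin k))

/-- The `i`-th edge of the Hamiltonian cycle that visits the vertices in the order
`σ 0, σ 1, …, σ (k - 1)`. -/
def cycleEdge (i : Fin k) : Sym2 (Fin k) := s(σ i, σ (i + 1))

lemma cycleEdge_injective (hk : 3 ≤ k) : Function.Injective (cycleEdge σ) := by
  intro i j h
  simp only [cycleEdge, Sym2.eq_iff, σ.injective.eq_iff] at h
  rcases h with h | ⟨hij, hji⟩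
  · exact h.1
  · have htwo : (1 + 1 : Fin k) = 0 := by
      rw [hij, add_assoc] at hji
      simpa using hji
    have hval := congrArg Fin.val htwo
    simp [Fin.val_add, Nat.mod_eq_of_lt (show 2 < k by omega)] at hval

variable {σ} {H : SimpleGraph (Fin k)}

open scoped Classical in
lemma sum_edges_le_sum_cycleEdge (hk : 3 ≤ k) (hH : ∀ i, H.Adj (σ i) (σ (i + 1)))
    {f : Sym2 (Fin k) → ℝ} (hf : ∀ e, f e ≤ 0) :
    ∑ p ∈ univ.filter (fun p : Fin k × Fin k => p.1 < p.2 ∧ H.Adj p.1 p.2), f s(p.1, p.2) ≤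
      ∑ i, f (cycleEdge σ i) := by
  set S := univ.filter fun p : Fin k × Fin k => p.1 < p.2 ∧ H.Adj p.1 p.2
  have hinj : Set.InjOn (fun p : Fin k × Fin k => s(p.1, p.2)) S := by
    rintro ⟨a, b⟩ hab ⟨a', b'⟩ hab' h
    simp only [S, coe_filter, mem_univ, true_and, Set.mem_ofPred_eq] at hab hab'
    rcases Sym2.eq_iff.1 h with ⟨rfl, rfl⟩ | ⟨rfl, rfl⟩
    · rfl
    · exact absurd hab.1 hab'.1.not_gt
  have hsub : univ.image (cycleEdge σ) ⊆ S.image fun p => s(p.1, p.2) := by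
    intro e he
    obtain ⟨i, -, rfl⟩ := mem_image.1 he
    rcases (hH i).ne.lt_or_gt with h | h
    · exact mem_image.2 ⟨(σ i, σ (i + 1)), by simp [S, h, hH i], rfl⟩
    · exact mem_image.2 ⟨(σ (i + 1), σ i), by simp [S, h, (hH i).symm], Sym2.eq_swap⟩
  rw [← sum_image (f := f) (cycleEdge_injective σ hk).injOn, ← sum_image (f := f) hinj]
  have := sum_le_sum_of_subset_of_nonneg (f := fun e => -f e) hsub fun e _ _ => by
    linarith [hf e]
  simpa only [sum_neg_distrib, neg_le_neg_iff] using this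

variable {τ γ : ℝ} {α : Fin k → ℝ} {β : Fin k → Fin k → ℝ}

open scoped Classical in
lemma sum_edge_excess_le (hk : 3 ≤ k) (hH : ∀ i, H.Adj (σ i) (σ (i + 1))) :
    ∑ p ∈ univ.filter (fun p : Fin k × Fin k => p.1 < p.2 ∧ H.Adj p.1 p.2),
        min (α p.1 + α p.2 - d * β p.1 p.2 - 1) 0 ≤
      2 * ∑ i, α i - d * ∑ i, bsym β (σ i) (σ (i + 1)) - k := by
  let excess : Sym2 (Fin k) → ℝ := Sym2.lift
    ⟨fun i j => min (α i + α j - d * bsym β i j - 1) 0, fun i j => by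
      simp only [bsym_comm β i j, add_comm (α i)]⟩
  have hsum : ∀ i, excess (cycleEdge σ i) ≤
      α (σ i) + α (σ (i + 1)) - d * bsym β (σ i) (σ (i + 1)) - 1 := fun i => min_le_left _ _
  calc ∑ p ∈ univ.filter (fun p : Fin k × Fin k => p.1 < p.2 ∧ H.Adj p.1 p.2),
        min (α p.1 + α p.2 - d * β p.1 p.2 - 1) 0
      = ∑ p ∈ univ.filter (fun p : Fin k × Fin k => p.1 < p.2 ∧ H.Adj p.1 p.2),
          excess s(p.1, p.2) := by
        refine sum_congr rfl fun p hp => ?_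
        simp only [excess, Sym2.lift_mk, bsym_of_lt (mem_filter.1 hp).2.1]
    _ ≤ ∑ i, excess (cycleEdge σ i) :=
        sum_edges_le_sum_cycleEdge hk hH (Sym2.ind fun i j => min_le_right _ _)
    _ ≤ ∑ i, (α (σ i) + α (σ (i + 1)) - d * bsym β (σ i) (σ (i + 1)) - 1) :=
        sum_le_sum fun i _ => hsum i
    _ = 2 * ∑ i, α i - d * ∑ i, bsym β (σ i) (σ (i + 1)) - k := by
        have hshift : ∑ i, α (σ (i + 1)) = ∑ i, α i :=
          Equiv.sum_comp ((Equiv.addRight 1).trans σ) α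
        simp only [sum_sub_distrib, sum_add_distrib, ← mul_sum, Equiv.sum_comp σ α, hshift,
          sum_const, card_univ, Fintype.card_fin, nsmul_eq_mul]
        ring

/- With `a = (τ - 1) / 2`, weighting the edge terms by `a ≤ γ` cancels the weights `α`, and
`∑ minBeta ≤ a ∑ bsym` along the cycle because `a ≤ 1 - 1 / k`. -/
lemma Feasible.fExp_le (hF : Feasible τ d α β) (hτ : 1 ≤ τ) (hγ : (τ - 1) / 2 ≤ γ) (hk : 3 ≤ k)
    (hkτ : 2 ≤ k * (3 - τ)) (hH : ∀ i, H.Adj (σ i) (σ (i + 1))) :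
    fExp τ γ d H α β ≤ k * (3 - τ) / 2 := by
  classical
  have ha : 0 ≤ (τ - 1) / 2 := by linarith
  have hkpos : (0 : ℝ) < k := by exact_mod_cast NeZero.pos k
  set Y := ∑ i, bsym β (σ i) (σ (i + 1))
  have hYnonpos : Y ≤ 0 := sum_nonpos fun i _ => hF.bsym_nonpos (hH i).ne
  have hminBeta : ∑ j, minBeta β j ≤ (τ - 1) / 2 * Y := by
    have := hF.mul_sum_minBeta_le σ
    refine le_of_mul_le_mul_left ?_ hkpos
    nlinarith
  unfold fExp
  set E := ∑ p ∈ univ.filter (fun p : Fin k × Fin k => p.1 < p.2 ∧ H.Adj p.1 p.2),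
    min (α p.1 + α p.2 - d * β p.1 p.2 - 1) 0
  have hEnonpos : E ≤ 0 := sum_nonpos fun p _ => min_le_right _ _
  have hEα := mul_le_mul_of_nonneg_left (sum_edge_excess_le (α := α) (β := β) (d := d) hk hH) ha
  have hEγ := mul_le_mul_of_nonpos_right hγ hEnonpos
  have hdβ := mul_le_mul_of_nonneg_left hminBeta (Nat.cast_nonneg (α := ℝ) d)
  convert_to k + (1 - τ) * ∑ i, α i + d * ∑ j, minBeta β j + γ * E ≤ _
  linarith

lemma starIsOptimal_half_zero (hτ : 1 < τ) (hτ' : τ ≤ 3) (hγ : (τ - 1) / 2 ≤ γ) (hk : 3 ≤ k)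
    (hkτ : 2 ≤ k * (3 - τ)) (hH : ∀ i, H.Adj (σ i) (σ (i + 1))) (s : StarKind) :
    starIsOptimal s τ γ d H (fun _ => 1 / 2) (fun _ _ => 0) := by
  have hmax : ∀ α β, Feasible τ d α β →
      fExp τ γ d H α β ≤ fExp τ γ d H (fun _ => 1 / 2) (fun _ _ => 0) := fun α β hF =>
    (hF.fExp_le hτ.le hγ hk hkτ hH).trans_eq (fExp_half_zero τ γ d H).symm
  cases s with
  | sub => exact ⟨feasible_half_zero hτ hτ', hmax⟩
  | ind =>
    exact ⟨feasible_half_zero hτ hτ', fun i j _ _ => by norm_num, fun α β hF _ => hmax α β hF⟩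

end Cycle

end Optimization

section ExpMeasure

/-- The measure `e^v dv` on `ℝ`, the law of logarithmic tail probabilities: a uniform variable is
`e^v` with `v` sampled from the restriction of this measure to `(-∞, 0)`. -/
def expMeasure : Measure ℝ := volume.withDensity fun v => ENNReal.ofReal (Real.exp v)

instance : SigmaFinite expMeasure := by
  unfold expMeasure
  infer_instance

lemma expMeasure_Iio (L : ℝ) : expMeasure (Set.Iio L) = ENNReal.ofReal (Real.exp L) := by
  rw [expMeasure, withDensity_apply _ measurableSet_Iio, ← ofReal_integral_eq_lintegral_ofReal
    ((integrableOn_exp_Iic L).mono_set Set.Iio_subset_Iic_self)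
    (.of_forall fun v => (Real.exp_pos v).le), ← integral_Iic_eq_integral_Iio, integral_exp_Iic]

lemma expMeasure_setOf_exp_lt {r : ℝ} (hr : 0 ≤ r) :
    expMeasure {v | Real.exp v < r} = ENNReal.ofReal r := by
  rcases hr.eq_or_lt with rfl | hr
  · simp [(Real.exp_pos _).not_gt]
  · rw [← Real.exp_log hr, ← expMeasure_Iio]
    simp only [Real.exp_lt_exp]
    rfl

end ExpMeasure

section TailQuantile

/-- The quantile function of a weight distribution `μ ≥ 1` in the logarithm of the tail probability:
the least `x ≥ 1` with `μ (x, ∞) ≤ e^v`. -/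
def tailQuantile (μ : Measure ℝ) (v : ℝ) : ℝ :=
  sInf {x | 1 ≤ x ∧ μ.real (Set.Ioi x) ≤ Real.exp v}

section Quantile

variable {μ : Measure ℝ} [IsProbabilityMeasure μ]

lemma measureReal_Ioi_eq_one_sub_cdf (μ : Measure ℝ) [IsProbabilityMeasure μ] (x : ℝ) :
    μ.real (Set.Ioi x) = 1 - ProbabilityTheory.cdf μ x := by
  rw [ProbabilityTheory.cdf_eq_real, ← probReal_compl_eq_one_sub measurableSet_Iic, Set.compl_Iic]

lemma tailQuantile_le_iff {v x : ℝ} :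
    tailQuantile μ v ≤ x ↔ 1 ≤ x ∧ μ.real (Set.Ioi x) ≤ Real.exp v := by
  have hne : {x | 1 ≤ x ∧ μ.real (Set.Ioi x) ≤ Real.exp v}.Nonempty := by
    have hcdf := (ProbabilityTheory.tendsto_cdf_atTop μ).const_sub 1
    simp only [sub_self, ← measureReal_Ioi_eq_one_sub_cdf] at hcdf
    obtain ⟨x, hx, hx'⟩ :=
      ((hcdf.eventually (gt_mem_nhds (Real.exp_pos v))).and (eventually_ge_atTop 1)).exists
    exact ⟨x, hx', hx.le⟩
  refine ⟨fun h => ⟨(le_csInf hne fun _ h => h.1).trans h, ?_⟩,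
    fun h => csInf_le ⟨1, fun _ h => h.1⟩ h⟩
  have hright : Tendsto (fun y => μ.real (Set.Ioi y)) (nhdsWithin x (Set.Ioi x))
      (nhds (μ.real (Set.Ioi x))) := by
    simp only [measureReal_Ioi_eq_one_sub_cdf]
    exact (((ProbabilityTheory.cdf μ).right_continuous x).mono
      Set.Ioi_subset_Ici_self).tendsto.const_sub 1
  refine le_of_tendsto hright (eventually_nhdsWithin_of_forall fun y hy => ?_)
  obtain ⟨z, hz, hzy⟩ := exists_lt_of_csInf_lt hne (lt_of_le_of_lt h hy)
  exact (measureReal_mono (Set.Ioi_subset_Ioi hzy.le)).trans hz.2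

lemma one_le_tailQuantile (μ : Measure ℝ) [IsProbabilityMeasure μ] (v : ℝ) :
    1 ≤ tailQuantile μ v :=
  (tailQuantile_le_iff.1 le_rfl).1

lemma antitone_tailQuantile (μ : Measure ℝ) [IsProbabilityMeasure μ] :
    Antitone (tailQuantile μ) := fun v _ hv =>
  have h := tailQuantile_le_iff (μ := μ) (v := v).1 le_rfl
  tailQuantile_le_iff.2 ⟨h.1, h.2.trans (Real.exp_le_exp.2 hv)⟩

lemma measurable_tailQuantile (μ : Measure ℝ) [IsProbabilityMeasure μ] :
    Measurable (tailQuantile μ) :=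
  (antitone_tailQuantile μ).measurable

lemma expMeasure_setOf_tailQuantile_le {x : ℝ} (hx : 1 ≤ x) (L : ℝ) :
    expMeasure {v | tailQuantile μ (v - L) ≤ x ∧ v < L} =
      ENNReal.ofReal (Real.exp L) * μ (Set.Iic x) := by
  set t := μ.real (Set.Ioi x) with ht
  have ht0 : 0 ≤ t * Real.exp L := mul_nonneg measureReal_nonneg (Real.exp_pos L).le
  have hset : {v | tailQuantile μ (v - L) ≤ x ∧ v < L} =
      Set.Iio L \ {v | Real.exp v < t * Real.exp L} := by
    ext v
    simp only [Set.mem_ofPred_eq, tailQuantile_le_iff, hx, true_and, ← ht, Real.exp_sub,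
      le_div_iff₀ (Real.exp_pos L), Set.mem_sdiff, Set.mem_Iio, not_lt]
    exact and_comm
  have hsub : {v | Real.exp v < t * Real.exp L} ⊆ Set.Iio L := fun v hv =>
    Real.exp_lt_exp.1 (hv.trans_le (mul_le_of_le_one_left (Real.exp_pos L).le measureReal_le_one))
  have hcompl : t = 1 - μ.real (Set.Iic x) := by
    rw [ht, ← probReal_compl_eq_one_sub measurableSet_Iic, Set.compl_Iic]
  rw [hset, measure_sdiff hsub
      (measurableSet_lt Real.measurable_exp measurable_const).nullMeasurableSet
      (by simp [expMeasure_setOf_exp_lt ht0]),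
    expMeasure_Iio, expMeasure_setOf_exp_lt ht0, ← ENNReal.ofReal_sub _ ht0,
    ← ofReal_measureReal (μ := μ) (s := Set.Iic x), ← ENNReal.ofReal_mul (Real.exp_pos L).le,
    hcompl]
  ring_nf

lemma map_tailQuantile (hμ : μ (Set.Iio 1) = 0) (L : ℝ) :
    (expMeasure.restrict (Set.Iio L)).map (fun v => tailQuantile μ (v - L)) =
      ENNReal.ofReal (Real.exp L) • μ := by
  have hmeas : Measurable fun v => tailQuantile μ (v - L) :=
    (measurable_tailQuantile μ).comp (by fun_prop)
  have : IsFiniteMeasure (expMeasure.restrict (Set.Iio L)) :=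
    isFiniteMeasure_restrict.2 (by simp [expMeasure_Iio])
  refine Measure.ext_of_Iic _ _ fun x => ?_
  rw [Measure.map_apply hmeas measurableSet_Iic, Measure.restrict_apply (hmeas measurableSet_Iic),
    Measure.smul_apply, smul_eq_mul]
  rcases lt_or_ge x 1 with hx | hx
  · have hempty : (fun v => tailQuantile μ (v - L)) ⁻¹' Set.Iic x = ∅ :=
      Set.eq_empty_of_forall_notMem fun v hv => ((one_le_tailQuantile μ _).trans hv).not_gt hx
    rw [hempty, measure_mono_null (Set.Iic_subset_Iio.2 hx) hμ]
    simp
  · exact expMeasure_setOf_tailQuantile_le hx L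

end Quantile

variable {τ c : ℝ} {μ : Measure ℝ}

lemma rpow_inv_rpow_one_sub (hτ : 1 < τ) {r : ℝ} (hr : 0 ≤ r) :
    (r ^ (τ - 1)⁻¹) ^ (1 - τ) = r⁻¹ := by
  have : (τ - 1)⁻¹ * (1 - τ) = -1 := by
    have : τ - 1 ≠ 0 := by linarith
    field_simp
    ring
  rw [← Real.rpow_mul hr, this, Real.rpow_neg_one]

lemma mul_exp_rpow_one_sub (hτ : 1 < τ) {r : ℝ} (hr : 0 ≤ r) (v : ℝ) :
    (r * Real.exp (-(τ - 1)⁻¹ * v)) ^ (1 - τ) = r ^ (1 - τ) * Real.exp v := by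
  have : -(τ - 1)⁻¹ * v * (1 - τ) = v := by
    have : τ - 1 ≠ 0 := by linarith
    field_simp
    ring
  rw [Real.mul_rpow hr (Real.exp_pos _).le, ← Real.exp_mul, this]

lemma tendsto_mul_exp_atBot (hτ : 1 < τ) {r : ℝ} (hr : 0 < r) :
    Tendsto (fun v : ℝ => r * Real.exp (-(τ - 1)⁻¹ * v)) atBot atTop := by
  have : 0 < (τ - 1)⁻¹ := inv_pos.2 (by linarith)
  exact (Real.tendsto_exp_atTop.comp
    ((tendsto_const_mul_atTop_of_neg (by linarith)).2 tendsto_id)).const_mul_atTop hr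

namespace WeightTail

lemma ae_one_le (hW : WeightTail τ c μ) : ∀ᵐ x ∂μ, 1 ≤ x := by
  rw [ae_iff]
  simpa [Set.Iio, not_le] using hW.2.1

lemma tendsto_tail_div_exp (hW : WeightTail τ c μ) (hτ : 1 < τ) {r : ℝ} (hr : 0 < r) :
    Tendsto (fun v => μ.real (Set.Ioi (r * Real.exp (-(τ - 1)⁻¹ * v))) / Real.exp v) atBot
      (nhds (c * r ^ (1 - τ))) := by
  have hlim := (hW.2.2.comp (tendsto_mul_exp_atBot hτ hr)).mul_const (c * r ^ (1 - τ))
  rw [one_mul] at hlim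
  refine hlim.congr fun v => ?_
  have hc := hW.1
  have := Real.rpow_pos_of_pos hr (1 - τ)
  simp only [Function.comp_apply, mul_exp_rpow_one_sub hτ hr.le, ← measureReal_def]
  field_simp

variable [IsProbabilityMeasure μ]

lemma exists_tail_le (hW : WeightTail τ c μ) (hτ : 1 ≤ τ) :
    ∃ C : ℝ, 1 ≤ C ∧ ∀ x : ℝ, 0 < x → μ.real (Set.Ioi x) ≤ C * x ^ (1 - τ) := by
  obtain ⟨hc, -, htail⟩ := hW
  obtain ⟨x₀, hx₀⟩ := eventually_atTop.1 (htail.eventually (gt_mem_nhds one_lt_two))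
  set X := max x₀ 1
  refine ⟨max 1 (max (2 * c) (X ^ (τ - 1))), le_max_left _ _, fun x hx => ?_⟩
  have : 0 < x ^ (1 - τ) := Real.rpow_pos_of_pos hx _
  rcases le_total X x with h | h
  · have htwo := hx₀ x ((le_max_left _ _).trans h)
    rw [div_lt_iff₀ (by positivity), ← mul_assoc] at htwo
    refine htwo.le.trans ?_
    gcongr
    exact (le_max_left _ _).trans (le_max_right _ _)
  · calc μ.real (Set.Ioi x) ≤ 1 := measureReal_le_one
      _ = x ^ (τ - 1) * x ^ (1 - τ) := by
        rw [← Real.rpow_add hx]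
        simp
      _ ≤ _ := by
        gcongr
        exact (Real.rpow_le_rpow hx.le h (by linarith)).trans
          ((le_max_right _ _).trans (le_max_right _ _))

lemma exists_tailQuantile_le (hW : WeightTail τ c μ) (hτ : 1 < τ) :
    ∃ C : ℝ, 0 < C ∧ ∀ v < 0, tailQuantile μ v ≤ C * Real.exp (-(τ - 1)⁻¹ * v) := by
  obtain ⟨C, hC, htail⟩ := hW.exists_tail_le hτ.le
  have hpow : 1 ≤ C ^ (τ - 1)⁻¹ := Real.one_le_rpow hC (inv_nonneg.2 (by linarith))
  refine ⟨C ^ (τ - 1)⁻¹, by positivity, fun v hv => ?_⟩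
  have hexp : 1 ≤ Real.exp (-(τ - 1)⁻¹ * v) :=
    Real.one_le_exp (mul_nonneg_of_nonpos_of_nonpos (by simp; linarith) hv.le)
  refine tailQuantile_le_iff.2 ⟨one_le_mul_of_one_le_of_one_le hpow hexp,
    (htail _ (by positivity)).trans_eq ?_⟩
  rw [mul_exp_rpow_one_sub hτ (by positivity), rpow_inv_rpow_one_sub hτ (by positivity)]
  field_simp

lemma eventually_lt_tailQuantile (hW : WeightTail τ c μ) (hτ : 1 < τ) {r : ℝ} (hr : 0 < r)
    (hrc : r < c ^ (τ - 1)⁻¹) :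
    ∀ᶠ v in atBot, r < tailQuantile μ v * Real.exp ((τ - 1)⁻¹ * v) := by
  have hc := hW.1
  have hone : 1 < c * r ^ (1 - τ) := by
    have h := Real.rpow_lt_rpow_of_neg hr hrc (by linarith : 1 - τ < 0)
    rwa [rpow_inv_rpow_one_sub hτ hc.le, inv_lt_iff_one_lt_mul₀' hc] at h
  filter_upwards [(hW.tendsto_tail_div_exp hτ hr).eventually (lt_mem_nhds hone)] with v hv
  rw [one_lt_div (Real.exp_pos v)] at hv
  have hlt : r * Real.exp (-(τ - 1)⁻¹ * v) < tailQuantile μ v :=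
    lt_of_not_ge fun h => hv.not_ge (tailQuantile_le_iff.1 h).2
  rwa [neg_mul, Real.exp_neg, ← div_eq_mul_inv, div_lt_iff₀ (Real.exp_pos _)] at hlt

lemma eventually_tailQuantile_le (hW : WeightTail τ c μ) (hτ : 1 < τ) {r : ℝ}
    (hrc : c ^ (τ - 1)⁻¹ < r) :
    ∀ᶠ v in atBot, tailQuantile μ v * Real.exp ((τ - 1)⁻¹ * v) ≤ r := by
  have hc := hW.1
  have hcpos : 0 < c ^ (τ - 1)⁻¹ := Real.rpow_pos_of_pos hc _
  have hone : c * r ^ (1 - τ) < 1 := by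
    have h := Real.rpow_lt_rpow_of_neg hcpos hrc (by linarith : 1 - τ < 0)
    rwa [rpow_inv_rpow_one_sub hτ hc.le, lt_inv_comm₀ (Real.rpow_pos_of_pos (hcpos.trans hrc) _) hc,
      ← one_div, lt_div_iff₀ (Real.rpow_pos_of_pos (hcpos.trans hrc) _)] at h
  filter_upwards [(hW.tendsto_tail_div_exp hτ (hcpos.trans hrc)).eventually (gt_mem_nhds hone),
    (tendsto_mul_exp_atBot hτ (hcpos.trans hrc)).eventually_ge_atTop 1] with v hv hv1
  have hle := tailQuantile_le_iff.2 ⟨hv1, ((div_lt_one (Real.exp_pos v)).1 hv).le⟩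
  rwa [neg_mul, Real.exp_neg, ← div_eq_mul_inv, le_div_iff₀ (Real.exp_pos _)] at hle

lemma tendsto_tailQuantile (hW : WeightTail τ c μ) (hτ : 1 < τ) :
    Tendsto (fun v => tailQuantile μ v * Real.exp ((τ - 1)⁻¹ * v)) atBot
      (nhds (c ^ (τ - 1)⁻¹)) := by
  have hcpos : 0 < c ^ (τ - 1)⁻¹ := Real.rpow_pos_of_pos hW.1 _
  refine tendsto_order.2 ⟨fun r hr => ?_, fun r hr => ?_⟩
  · obtain ⟨r', hr', hr'c⟩ := exists_between (max_lt hr hcpos)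
    filter_upwards [hW.eventually_lt_tailQuantile hτ ((le_max_right _ _).trans_lt hr') hr'c]
      with v hv using ((le_max_left _ _).trans_lt hr').trans hv
  · obtain ⟨r', hcr', hr'⟩ := exists_between hr
    filter_upwards [hW.eventually_tailQuantile_le hτ hcr'] with v hv using hv.trans_lt hr'

lemma integrable_id (hW : WeightTail τ c μ) (hτ : 2 < τ) : Integrable (fun x => x) μ := by
  obtain ⟨C, -, hquantile⟩ := hW.exists_tailQuantile_le (by linarith)
  have ha : 0 < 1 - (τ - 1)⁻¹ := sub_pos.2 (inv_lt_one_of_one_lt₀ (by linarith))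
  have hmap := map_tailQuantile hW.2.1 0
  simp only [sub_zero, Real.exp_zero, ENNReal.ofReal_one, one_smul] at hmap
  have hmeas := measurable_tailQuantile μ
  refine ⟨measurable_id.aestronglyMeasurable, ?_⟩
  unfold HasFiniteIntegral
  rw [← hmap, lintegral_map (by fun_prop) hmeas, expMeasure, restrict_withDensity measurableSet_Iio,
    lintegral_withDensity_eq_lintegral_mul _ (by fun_prop) (g := fun v => ‖tailQuantile μ v‖ₑ)
      hmeas.enorm]
  refine (setLIntegral_mono (g := fun v => ENNReal.ofReal (C * Real.exp ((1 - (τ - 1)⁻¹) * v)))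
    (by fun_prop) fun v hv => ?_).trans_lt ?_
  · rw [Pi.mul_apply, Real.enorm_of_nonneg (by linarith [one_le_tailQuantile μ v]),
      ← ENNReal.ofReal_mul (Real.exp_pos _).le]
    refine ENNReal.ofReal_le_ofReal ((mul_le_mul_of_nonneg_left (hquantile v hv)
      (Real.exp_pos v).le).trans_eq ?_)
    rw [mul_left_comm, ← Real.exp_add]
    ring_nf
  · exact (((integrableOn_exp_mul_Iic ha 0).mono_set
      Set.Iio_subset_Iic_self).const_mul C).lintegral_lt_top

lemma wMean_pos (hW : WeightTail τ c μ) (hτ : 2 < τ) : 0 < wMean μ :=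
  calc (0 : ℝ) < ∫ _, (1 : ℝ) ∂μ := by simp
    _ ≤ wMean μ := integral_mono_ae (integrable_const 1) (hW.integrable_id hτ) hW.ae_one_le

end WeightTail

end TailQuantile

section ProductMeasure

lemma measurePreserving_precomp {ι κ X : Type*} [Fintype ι] [Fintype κ] [MeasurableSpace X]
    (ν : Measure X) [IsProbabilityMeasure ν] {f : ι → κ} (hf : Function.Injective f) :
    MeasurePreserving (fun (x : κ → X) i => x (f i)) (Measure.pi fun _ => ν)
      (Measure.pi fun _ => ν) := by
  refine ⟨by fun_prop, ?_⟩
  have hindep := (ProbabilityTheory.iIndepFun_pi (μ := fun _ : κ => ν) (X := fun _ x => x)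
    fun _ => aemeasurable_id).precomp hf
  rw [ProbabilityTheory.iIndepFun_iff_map_fun_eq_pi_map
    fun i => (measurable_pi_apply (f i)).aemeasurable] at hindep
  rw [hindep]
  congr 1 with i : 1
  exact (measurePreserving_eval (fun _ : κ => ν) (f i)).map_eq

lemma lintegral_prod_pi {n : ℕ} {X : Fin n → Type*} [∀ i, MeasurableSpace (X i)]
    (ν : ∀ i, Measure (X i)) [∀ i, SigmaFinite (ν i)] {f : ∀ i, X i → ENNReal}
    (hf : ∀ i, Measurable (f i)) :
    ∫⁻ x, ∏ i, f i (x i) ∂Measure.pi ν = ∏ i, ∫⁻ x, f i x ∂ν i := by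
  induction n with
  | zero => simp
  | succ n ih =>
    have htail : Measurable fun x : ∀ i : Fin n, X i.succ => ∏ i, f i.succ (x i) := by fun_prop
    rw [← (measurePreserving_piFinSuccAbove ν 0).symm.lintegral_comp (by fun_prop)]
    simp only [Fin.prod_univ_succ]
    rw [← ih _ (fun i => hf i.succ), ← lintegral_prod_mul (hf 0).aemeasurable htail.aemeasurable]
    rfl

lemma pi_withDensity {n : ℕ} {X : Fin n → Type*} [∀ i, MeasurableSpace (X i)]
    (ν : ∀ i, Measure (X i)) [∀ i, SigmaFinite (ν i)] {f : ∀ i, X i → ENNReal}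
    (hf : ∀ i, Measurable (f i)) [∀ i, SigmaFinite ((ν i).withDensity (f i))] :
    (Measure.pi fun i => (ν i).withDensity (f i)) =
      (Measure.pi ν).withDensity fun x => ∏ i, f i (x i) := by
  refine Measure.pi_eq fun s hs => ?_
  rw [withDensity_apply _ (.univ_pi hs), Measure.restrict_pi_pi, lintegral_prod_pi _ hf]
  exact prod_congr rfl fun i _ => (withDensity_apply _ (hs i)).symm

variable {X : Type*} [MeasurableSpace X] (ν : Measure X) [IsProbabilityMeasure ν]

lemma lintegral_path_le {m : ℕ} {P : Fin m → X → X → ENNReal}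
    (hP : ∀ i, Measurable (Function.uncurry (P i))) {J : Fin m → ENNReal}
    (hJ : ∀ i y, ∫⁻ x, P i x y ∂ν ≤ J i) :
    ∫⁻ x, ∏ i, P i (x i.castSucc) (x i.succ) ∂(Measure.pi fun _ : Fin (m + 1) => ν) ≤
      ∏ i, J i := by
  induction m with
  | zero => simp
  | succ m ih =>
    have hP₂ : ∀ {n : ℕ} i (a b : Fin n), Measurable fun x : Fin n → X => P i (x a) (x b) :=
      fun i a b => (hP i).comp (by fun_prop : Measurable fun x : Fin _ → X => (x a, x b))
    have hmp := (measurePreserving_piFinSuccAbove (fun _ : Fin (m + 2) => ν) 0).symm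
    have hmeas : Measurable fun x : Fin (m + 2) → X => ∏ i, P i (x i.castSucc) (x i.succ) :=
      measurable_fun_prod _ fun i _ => hP₂ i _ _
    refine ((hmp.lintegral_comp hmeas).symm.trans
      (lintegral_prod_symm _ (hmeas.comp hmp.measurable).aemeasurable)).trans_le ?_
    calc _ = ∫⁻ y, (∫⁻ x, P 0 x (y 0) ∂ν) * ∏ i : Fin m, P i.succ (y i.castSucc) (y i.succ)
          ∂(Measure.pi fun _ : Fin (m + 1) => ν) := by
          refine lintegral_congr fun y => ?_
          refine (lintegral_congr fun x => ?_).trans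
            (lintegral_mul_const _ ((hP 0).comp (by fun_prop : Measurable fun x => (x, y 0))))
          rw [Fin.prod_univ_succ]
          rfl
      _ ≤ ∫⁻ y, J 0 * ∏ i : Fin m, P i.succ (y i.castSucc) (y i.succ)
          ∂(Measure.pi fun _ : Fin (m + 1) => ν) := by
          gcongr
          exact hJ 0 _
      _ ≤ _ := by
          rw [lintegral_const_mul _ (measurable_fun_prod _ fun i _ => hP₂ _ _ _),
            Fin.prod_univ_succ]
          gcongr
          exact ih (fun i => hP i.succ) fun i => hJ i.succ

lemma lintegral_cycle_mul_le {k : ℕ} [NeZero k] (σ : Equiv.Perm (Fin k))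
    {P : Fin k → X → X → ENNReal} (hP : ∀ i, Measurable (Function.uncurry (P i)))
    (hP₁ : ∀ i x y, P i x y ≤ 1) {J : Fin k → ENNReal}
    (hJ : ∀ i y, ∫⁻ x, P i x y ∂ν ≤ J i) (e : Fin k) :
    (∫⁻ x, ∏ i, P i (x (σ i)) (x (σ (i + 1))) ∂(Measure.pi fun _ : Fin k => ν)) * J e ≤
      ∏ i, J i := by
  obtain ⟨m, rfl⟩ := Nat.exists_eq_succ_of_ne_zero (NeZero.ne k)
  set r := rotateToLast e
  have hdrop : ∀ x : Fin (m + 1) → X, ∏ i, P i (x (σ i)) (x (σ (i + 1))) ≤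
      ∏ j : Fin m, P (r j.castSucc) (x (σ (r j.castSucc))) (x (σ (r j.succ))) := fun x => by
    rw [← prod_rotateToLast_mul e]
    simp only [r, rotateToLast_succ]
    exact mul_le_of_le_one_right' (hP₁ _ _ _)
  rw [← prod_rotateToLast_mul e J]
  gcongr
  refine (lintegral_mono hdrop).trans ?_
  have hmeas : Measurable fun x : Fin (m + 1) → X =>
      ∏ j : Fin m, P (r j.castSucc) (x j.castSucc) (x j.succ) := measurable_fun_prod _ fun j _ =>
    (hP _).comp (by fun_prop : Measurable fun x : Fin (m + 1) → X => (x j.castSucc, x j.succ))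
  exact ((measurePreserving_precomp ν (r.trans σ).injective).lintegral_comp hmeas).trans_le
    (lintegral_path_le ν (fun _ => hP _) fun j => hJ (r j.castSucc))

lemma le_prod_rpow_of_mul_le {k : ℕ} [NeZero k] {A : ENNReal} {J : Fin k → ENNReal}
    (hJ₀ : ∀ i, J i ≠ 0) (hJ : ∀ i, J i ≠ ⊤) (h : ∀ e, A * J e ≤ ∏ i, J i) :
    A ≤ ∏ i, J i ^ (((k : ℝ) - 1) / k) := by
  obtain ⟨m, rfl⟩ := Nat.exists_eq_succ_of_ne_zero (NeZero.ne k)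
  have hpow : A ^ (m + 1) ≤ (∏ i, J i) ^ m := by
    have := prod_le_prod' fun e (_ : e ∈ univ) => h e
    rw [prod_mul_distrib, prod_const, prod_const, card_univ, Fintype.card_fin,
      pow_succ (∏ i, J i)] at this
    exact (ENNReal.mul_le_mul_iff_left (prod_ne_zero_iff.2 fun i _ => hJ₀ i)
      (ENNReal.prod_ne_top fun i _ => hJ i)).1 this
  have hroot := ENNReal.rpow_le_rpow hpow (by positivity : (0 : ℝ) ≤ ((m + 1 : ℕ) : ℝ)⁻¹)
  rw [ENNReal.pow_rpow_inv_natCast m.succ_ne_zero, ← ENNReal.rpow_natCast, ← ENNReal.rpow_mul,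
    ← div_eq_mul_inv] at hroot
  rw [ENNReal.prod_rpow_of_nonneg (div_nonneg (by simp) (by positivity))]
  simpa using hroot

end ProductMeasure

section LayerCake

lemma le_mul_rpow_of_le_div_rpow {s D u γ : ℝ} (hs : 0 ≤ s) (hD : 0 ≤ D) (hγ : 0 < γ) (hu : 0 < u)
    (h : u ≤ (s / D) ^ γ) : D ≤ s * u ^ (-γ⁻¹) := by
  rcases hD.eq_or_lt with rfl | hD
  · positivity
  · have hroot := Real.rpow_le_rpow hu.le h (inv_nonneg.2 hγ.le)
    rw [Real.rpow_rpow_inv (by positivity) hγ.ne', le_div_iff₀ hD] at hroot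
    rwa [Real.rpow_neg hu.le, ← div_eq_mul_inv, le_div_iff₀ (by positivity), mul_comm]

lemma lintegral_Ioc_rpow_neg_inv {γ : ℝ} (hγ : 1 < γ) {A : ℝ} (hA : 0 ≤ A) :
    ∫⁻ u in Set.Ioc (0 : ℝ) 1, ENNReal.ofReal (A * u ^ (-γ⁻¹)) =
      ENNReal.ofReal (A * (γ / (γ - 1))) := by
  have hγ' : -1 < -γ⁻¹ := neg_lt_neg (inv_lt_one_of_one_lt₀ hγ)
  have hint : IntegrableOn (fun u : ℝ => A * u ^ (-γ⁻¹)) (Set.Ioc 0 1) :=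
    ((intervalIntegrable_iff_integrableOn_Ioc_of_le zero_le_one).1
      (intervalIntegral.intervalIntegrable_rpow' hγ')).const_mul A
  rw [← ofReal_integral_eq_lintegral_ofReal hint, ← intervalIntegral.integral_of_le zero_le_one,
    intervalIntegral.integral_const_mul, integral_rpow (.inl hγ')]
  · have h₁ : γ - 1 ≠ 0 := (sub_pos.2 hγ).ne'
    have h₂ : -γ⁻¹ + 1 = (γ - 1) / γ := by
      field_simp
      ring
    rw [h₂, Real.one_rpow, Real.zero_rpow (div_ne_zero h₁ (by positivity)), sub_zero,
      one_div_div]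
  · filter_upwards [ae_restrict_mem measurableSet_Ioc] with u hu
    exact mul_nonneg hA (Real.rpow_nonneg hu.1.le _)

lemma lintegral_min_one_div_rpow_le {X : Type*} [MeasurableSpace X] {ν : Measure X} {D : X → ℝ}
    (hD : Measurable D) (hD₀ : ∀ x, 0 ≤ D x) {C : ℝ} (hC : 0 ≤ C)
    (hν : ∀ r, 0 ≤ r → ν {x | D x ≤ r} ≤ ENNReal.ofReal (C * r)) {γ : ℝ} (hγ : 1 < γ) {s : ℝ}
    (hs : 0 ≤ s) :
    ∫⁻ x, ENNReal.ofReal (min 1 ((s / D x) ^ γ)) ∂ν ≤ ENNReal.ofReal (C * s * (γ / (γ - 1))) := by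
  have hlevel : ∀ u ∈ Set.Ioi (0 : ℝ), ν {x | u ≤ min 1 ((s / D x) ^ γ)} ≤
      (Set.Ioc (0 : ℝ) 1).indicator (fun u => ENNReal.ofReal (C * s * u ^ (-γ⁻¹))) u := by
    intro u hu
    by_cases hu₁ : u ≤ 1
    · rw [Set.indicator_of_mem (Set.mem_Ioc.2 ⟨hu, hu₁⟩), mul_assoc]
      exact (measure_mono fun x hx => le_mul_rpow_of_le_div_rpow hs (hD₀ x) (by linarith) hu
        (hx.trans (min_le_right _ _))).trans
        (hν _ (mul_nonneg hs (Real.rpow_nonneg (le_of_lt hu) _)))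
    · have hempty : {x | u ≤ min 1 ((s / D x) ^ γ)} = ∅ :=
        Set.eq_empty_of_forall_notMem fun x hx => hu₁ (hx.trans (min_le_left _ _))
      rw [hempty, measure_empty]
      exact zero_le
  rw [lintegral_eq_lintegral_meas_le _ (.of_forall fun x => le_min zero_le_one
    (Real.rpow_nonneg (div_nonneg hs (hD₀ x)) _)) (by fun_prop)]
  calc _ ≤ ∫⁻ u, (Set.Ioc (0 : ℝ) 1).indicator
        (fun u => ENNReal.ofReal (C * s * u ^ (-γ⁻¹))) u :=
        (setLIntegral_mono' measurableSet_Ioi hlevel).trans (setLIntegral_le_lintegral _ _)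
    _ = _ := by
        rw [lintegral_indicator measurableSet_Ioc, lintegral_Ioc_rpow_neg_inv hγ (by positivity)]

end LayerCake

section ConnectionKernel

variable {d : ℕ}

instance : IsProbabilityMeasure (volume : Measure (AddCircle (1 : ℝ))) :=
  ⟨by rw [AddCircle.measure_univ, ENNReal.ofReal_one]⟩

lemma volume_setOf_dist_pow_le (hd : d ≠ 0) (y : Torus d) {r : ℝ} (hr : 0 ≤ r) :
    volume {x : Torus d | dist x y ^ d ≤ r} ≤ ENNReal.ofReal (2 ^ d * r) := by
  have hball : {x : Torus d | dist x y ^ d ≤ r} = Metric.closedBall y (r ^ (d : ℝ)⁻¹) := by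
    ext x
    rw [Set.mem_ofPred_eq, Metric.mem_closedBall, Real.le_rpow_inv_iff_of_pos dist_nonneg hr
      (by positivity), Real.rpow_natCast]
  rw [hball, volume_pi_closedBall _ (by positivity)]
  calc _ ≤ ∏ _i : Fin d, ENNReal.ofReal (2 * r ^ (d : ℝ)⁻¹) := by
        gcongr
        rw [AddCircle.volume_closedBall]
        exact ENNReal.ofReal_le_ofReal (min_le_right _ _)
    _ = _ := by
        rw [prod_const, card_univ, Fintype.card_fin, ← ENNReal.ofReal_pow (by positivity), mul_pow,
          Real.rpow_inv_natCast_pow hr hd]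

/-- The GIRG connection probability `min(1, (t / ‖x - y‖^d)^γ)` of two vertices at positions `x`
and `y`, where `t = w w' / (n μ)` is the normalised product of their weights. -/
def connKernel (γ t : ℝ) (x y : Torus d) : ℝ := min 1 ((t / dist x y ^ d) ^ γ)

variable {γ t : ℝ} {x y : Torus d}

lemma connKernel_comm : connKernel γ t x y = connKernel γ t y x := by
  rw [connKernel, connKernel, dist_comm]

lemma connKernel_le_one : connKernel γ t x y ≤ 1 := min_le_left _ _

lemma connKernel_mono (hγ : 0 ≤ γ) {t' : ℝ} (ht : 0 ≤ t) (h : t ≤ t') :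
    connKernel γ t x y ≤ connKernel γ t' x y := by
  unfold connKernel
  gcongr

@[fun_prop]
lemma measurable_connKernel {Y : Type*} [MeasurableSpace Y] {t : Y → ℝ} {x y : Y → Torus d}
    (ht : Measurable t) (hx : Measurable x) (hy : Measurable y) :
    Measurable fun z => connKernel γ (t z) (x z) (y z) := by
  unfold connKernel
  fun_prop

lemma lintegral_connKernel_le (hd : d ≠ 0) (hγ : 1 < γ) (ht : 0 ≤ t) (y : Torus d) :
    ∫⁻ x, ENNReal.ofReal (connKernel γ t x y) ≤
      ENNReal.ofReal (min 1 (2 ^ d * (γ / (γ - 1)) * t)) := by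
  rw [ENNReal.ofReal_min]
  refine le_min ?_ ?_
  · calc _ ≤ ∫⁻ _ : Torus d, ENNReal.ofReal 1 := by
          gcongr
          exact connKernel_le_one
      _ = _ := by rw [lintegral_const, measure_univ, mul_one]
  · rw [mul_right_comm]
    exact lintegral_min_one_div_rpow_le (by fun_prop) (fun x => by positivity) (by positivity)
      (fun r hr => volume_setOf_dist_pow_le hd y hr) hγ ht

end ConnectionKernel

section CycleIntegral

variable {k : ℕ} [NeZero k] (σ : Equiv.Perm (Fin k))

/-- The linear map sending a vertex labelling `v` to the edge labelling `v_{σ i} + v_{σ (i+1)}` of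
the cycle through `σ 0, σ 1, …`. -/
def cycleSum : (Fin k → ℝ) →ₗ[ℝ] Fin k → ℝ :=
  LinearMap.funLeft ℝ ℝ σ + LinearMap.funLeft ℝ ℝ fun i => σ (i + 1)

lemma cycleSum_apply (v : Fin k → ℝ) (i : Fin k) : cycleSum σ v i = v (σ i) + v (σ (i + 1)) := rfl

@[fun_prop]
lemma measurable_cycleSum : Measurable (cycleSum σ) :=
  (LinearMap.continuous_of_finiteDimensional _).measurable

lemma sum_cycleSum (v : Fin k → ℝ) : ∑ i, cycleSum σ v i = 2 * ∑ i, v i := by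
  have hshift : ∑ i, v (σ (i + 1)) = ∑ i, v i := Equiv.sum_comp ((Equiv.addRight 1).trans σ) v
  simp only [cycleSum_apply]
  rw [sum_add_distrib, hshift, Equiv.sum_comp σ v, two_mul]

lemma det_cycleSum_ne_zero (hk : Odd k) : LinearMap.det (cycleSum σ) ≠ 0 := by
  refine fun hdet => (LinearMap.bot_lt_ker_of_det_eq_zero hdet).ne' ?_
  refine LinearMap.ker_eq_bot'.2 fun v hv => ?_
  have hstep : ∀ i, v (σ (i + 1)) = -v (σ i) := fun i =>
    eq_neg_of_add_eq_zero_right (congrFun hv i)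
  have halternate : ∀ (j : ℕ) i, v (σ (i + j • 1)) = (-1) ^ j * v (σ i) := by
    intro j
    induction j with
    | zero => simp
    | succ j ih =>
      intro i
      rw [succ_nsmul, ← add_assoc, hstep, ih, pow_succ]
      ring
  have hone : k • (1 : Fin k) = 0 := by simpa using card_nsmul_eq_zero (x := (1 : Fin k))
  ext i
  have hround := halternate k (σ.symm i)
  rw [hone, add_zero, hk.neg_one_pow, σ.apply_symm_apply] at hround
  simp only [Pi.zero_apply]
  linarith

lemma lintegral_prod_cycleSum_lt_top (hk : Odd k) {ψ : ℝ → ENNReal} (hψ : Measurable ψ)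
    (hfin : ∫⁻ z, ENNReal.ofReal (Real.exp (z / 2)) * ψ z < ⊤) :
    ∫⁻ v, ∏ i, ψ (cycleSum σ v i) ∂(Measure.pi fun _ => expMeasure) < ⊤ := by
  have : ∀ _ : Fin k, SigmaFinite (volume.withDensity fun v => ENNReal.ofReal (Real.exp v)) :=
    fun _ => inferInstanceAs (SigmaFinite expMeasure)
  set Φ : (Fin k → ℝ) → ENNReal := fun z => ∏ i, (ENNReal.ofReal (Real.exp (z i / 2)) * ψ (z i))
  have hdensity : ∀ v : Fin k → ℝ, (∏ i, ENNReal.ofReal (Real.exp (v i))) *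
      ∏ i, ψ (cycleSum σ v i) = Φ (cycleSum σ v) := by
    intro v
    simp only [Φ]
    rw [prod_mul_distrib, ← ENNReal.ofReal_prod_of_nonneg fun i _ => (Real.exp_pos _).le,
      ← ENNReal.ofReal_prod_of_nonneg fun i _ => (Real.exp_pos _).le, ← Real.exp_sum,
      ← Real.exp_sum, ← sum_div, sum_cycleSum, mul_div_cancel_left₀ _ two_ne_zero]
  calc _ = ∫⁻ v, Φ (cycleSum σ v) := by
        simp only [expMeasure]
        rw [pi_withDensity (fun _ : Fin k => volume) (fun _ => by fun_prop), ← volume_pi,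
          lintegral_withDensity_eq_lintegral_mul _ (by fun_prop) (by fun_prop)]
        exact lintegral_congr hdensity
    _ = ENNReal.ofReal |(LinearMap.det (cycleSum σ))⁻¹| * ∫⁻ z, Φ z := by
        rw [← lintegral_map (by fun_prop) (measurable_cycleSum σ),
          Measure.map_linearMap_addHaar_eq_smul_addHaar _ (det_cycleSum_ne_zero σ hk),
          lintegral_smul_measure, smul_eq_mul]
    _ < ⊤ := by
        rw [volume_pi, lintegral_prod_pi _ fun _ => (by fun_prop : Measurable fun z =>
          ENNReal.ofReal (Real.exp (z / 2)) * ψ z)]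
        exact ENNReal.mul_lt_top ENNReal.ofReal_lt_top (ENNReal.prod_lt_top fun _ _ => hfin)

lemma lintegral_exp_mul_min_one_rpow_lt_top {a b θ K : ℝ} (hb : 0 < b) (hθ : 0 ≤ θ)
    (hab : b < a * θ) (hK : 0 ≤ K) :
    ∫⁻ z : ℝ, ENNReal.ofReal (Real.exp (b * z)) *
      ENNReal.ofReal (min 1 (K * Real.exp (-a * z))) ^ θ < ⊤ := by
  rw [← lintegral_add_compl _ (measurableSet_Iic (a := (0 : ℝ))), Set.compl_Iic]
  refine ENNReal.add_lt_top.2 ⟨?_, ?_⟩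
  · refine lt_of_le_of_lt (lintegral_mono fun z => ?_)
      (integrableOn_exp_mul_Iic hb 0).lintegral_lt_top
    refine mul_le_of_le_one_right' (ENNReal.rpow_le_one ?_ hθ)
    exact ENNReal.ofReal_le_one.2 (min_le_left _ _)
  · have hint : IntegrableOn (fun z : ℝ => K ^ θ * Real.exp ((b - a * θ) * z)) (Set.Ioi 0) :=
      (integrableOn_exp_mul_Ioi (by linarith) 0).const_mul _
    refine lt_of_le_of_lt (lintegral_mono fun z => ?_) hint.lintegral_lt_top
    calc _ ≤ ENNReal.ofReal (Real.exp (b * z)) *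
          ENNReal.ofReal (K * Real.exp (-a * z)) ^ θ := by
          gcongr
          exact min_le_right _ _
      _ = _ := by
          rw [ENNReal.ofReal_rpow_of_nonneg (by positivity) hθ,
            ← ENNReal.ofReal_mul (Real.exp_pos _).le, Real.mul_rpow hK (Real.exp_pos _).le,
            ← Real.exp_mul, mul_left_comm, ← Real.exp_add]
          ring_nf

variable {d : ℕ}

/-- The product of the connection probabilities along the cycle `σ 0, σ 1, …` for vertices at
positions `z.2`, when vertex `i` has weight proportional to `exp (-a * z.1 i)`. -/
def cycleMajorant (γ a C : ℝ) (z : (Fin k → ℝ) × (Fin k → Torus d)) : ENNReal :=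
  ∏ i, ENNReal.ofReal (connKernel γ (C * Real.exp (-a * cycleSum σ z.1 i)) (z.2 (σ i))
    (z.2 (σ (i + 1))))

@[fun_prop]
lemma measurable_cycleMajorant (γ a C : ℝ) : Measurable (cycleMajorant (d := d) σ γ a C) := by
  unfold cycleMajorant
  fun_prop

variable {γ a C : ℝ}

lemma lintegral_cycleMajorant_le (hd : d ≠ 0) (hγ : 1 < γ) (hC : 0 < C) (v : Fin k → ℝ) :
    ∫⁻ x, cycleMajorant (d := d) σ γ a C (v, x) ≤ ∏ i, ENNReal.ofReal
      (min 1 (2 ^ d * (γ / (γ - 1)) * C * Real.exp (-a * cycleSum σ v i))) ^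
        (((k : ℝ) - 1) / k) := by
  refine le_prod_rpow_of_mul_le (fun i => ?_) (fun i => ENNReal.ofReal_ne_top) fun e => ?_
  · have := sub_pos.2 hγ
    rw [ENNReal.ofReal_ne_zero_iff]
    positivity
  · refine lintegral_cycle_mul_le volume σ (P := fun i x y => ENNReal.ofReal
      (connKernel γ (C * Real.exp (-a * cycleSum σ v i)) x y)) (fun i => ?_)
      (fun i x y => ENNReal.ofReal_le_one.2 connKernel_le_one) (fun i y => ?_) e
    · simp only [Function.uncurry_def]
      fun_prop
    · rw [mul_assoc]
      exact lintegral_connKernel_le hd hγ (by positivity) y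

lemma lintegral_cycleMajorant_lt_top (hd : d ≠ 0) (hγ : 1 < γ) (hC : 0 < C) (hk : Odd k)
    (ha : 1 / 2 < a * (((k : ℝ) - 1) / k)) :
    ∫⁻ z, cycleMajorant σ γ a C z ∂((Measure.pi fun _ : Fin k => expMeasure).prod
      (Measure.pi fun _ : Fin k => (volume : Measure (Torus d)))) < ⊤ := by
  have hk₁ : (1 : ℝ) ≤ k := Nat.one_le_cast.2 (NeZero.pos k)
  have := sub_pos.2 hγ
  rw [lintegral_prod _ (by fun_prop), ← volume_pi]
  refine (lintegral_mono (lintegral_cycleMajorant_le σ hd hγ hC)).trans_lt ?_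
  refine lintegral_prod_cycleSum_lt_top σ hk (ψ := fun z => ENNReal.ofReal
    (min 1 (2 ^ d * (γ / (γ - 1)) * C * Real.exp (-a * z))) ^ (((k : ℝ) - 1) / k))
    (by fun_prop) ?_
  simp only [div_eq_inv_mul _ (2 : ℝ)]
  exact lintegral_exp_mul_min_one_rpow_lt_top (by norm_num)
    (div_nonneg (by linarith) (by positivity)) (by linarith) (by positivity)

end CycleIntegral

section PatternEvent

/-- The law of a coin, uniform on `[0, 1]`. -/
abbrev coinMeasure : Measure ℝ := volume.restrict (Set.Icc 0 1)

instance : IsProbabilityMeasure coinMeasure := ⟨by simp⟩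

instance (μ : Measure ℝ) [IsProbabilityMeasure μ] (d n : ℕ) :
    IsProbabilityMeasure (girgMeasure μ d n) := by
  unfold girgMeasure
  infer_instance

lemma coinMeasure_Iic (p : ℝ) : coinMeasure (Set.Iic p) = ENNReal.ofReal (min p 1) := by
  have hinter : Set.Iic p ∩ Set.Icc 0 1 = Set.Icc 0 (min p 1) := by
    ext y
    simp only [Set.mem_inter_iff, Set.mem_Iic, Set.mem_Icc, le_min_iff]
    tauto
  rw [Measure.restrict_apply measurableSet_Iic, hinter, Real.volume_Icc, sub_zero]

lemma coinMeasure_Ioi (p : ℝ) : coinMeasure (Set.Ioi p) = 1 - ENNReal.ofReal (min p 1) := by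
  rw [← Set.compl_Iic, prob_compl_eq_one_sub measurableSet_Iic, coinMeasure_Iic]

variable {k d : ℕ} (s : StarKind) (H : SimpleGraph (Fin k))

open scoped Classical in
/-- The values of the coin of the pair `e` that are compatible with the pattern `H` when `e` has
connection probability `p`: edges must be present, and for induced counts non-edges must be
absent. -/
def acceptSet (e : Sym2 (Fin k)) (p : ℝ) : Set ℝ :=
  if e ∈ H.edgeSet then Set.Iic p else if s = .ind ∧ e ∈ Hᶜ.edgeSet then Set.Ioi p else Set.univ

lemma measurableSet_setOf_mem_acceptSet (e : Sym2 (Fin k)) {X : Type*} [MeasurableSpace X]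
    {f g : X → ℝ} (hf : Measurable f) (hg : Measurable g) :
    MeasurableSet {x | f x ∈ acceptSet s H e (g x)} := by
  unfold acceptSet
  split_ifs
  · exact measurableSet_le hf hg
  · exact measurableSet_lt hg hf
  · exact .univ

lemma continuous_coinMeasure_acceptSet (e : Sym2 (Fin k)) :
    Continuous fun p => coinMeasure (acceptSet s H e p) := by
  have hIic : Continuous fun p => coinMeasure (Set.Iic p) := by
    simp only [coinMeasure_Iic]
    exact ENNReal.continuous_ofReal.comp (by fun_prop)
  unfold acceptSet
  split_ifs
  · exact hIic
  · simp only [coinMeasure_Ioi, ← coinMeasure_Iic]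
    exact (ENNReal.continuous_sub_left ENNReal.one_ne_top).comp hIic
  · exact continuous_const

lemma coinMeasure_acceptSet_pos {e : Sym2 (Fin k)} {p : ℝ} (he : ¬e.IsDiag → 0 < p ∧ p < 1) :
    0 < coinMeasure (acceptSet s H e p) := by
  unfold acceptSet
  split_ifs with h h'
  · rw [coinMeasure_Iic, ENNReal.ofReal_pos]
    exact lt_min (he (H.not_isDiag_of_mem_edgeSet h)).1 one_pos
  · rw [coinMeasure_Ioi, tsub_pos_iff_lt, ENNReal.ofReal_lt_one]
    exact min_lt_of_left_lt (he (Hᶜ.not_isDiag_of_mem_edgeSet h'.2)).2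
  · simp

/-- The connection probability of a pair of vertices with weights `w` and positions `x`. The
normalisation `M` is `n μ` in the GIRG on `n` vertices. -/
def edgeProb (γ M : ℝ) (w : Fin k → ℝ) (x : Fin k → Torus d) : Sym2 (Fin k) → ℝ :=
  Sym2.lift ⟨fun i j => connKernel γ (w i * w j / M) (x i) (x j), fun i j => by
    simp only [mul_comm (w i), connKernel_comm]⟩

variable {γ M : ℝ}

lemma edgeProb_mk (w : Fin k → ℝ) (x : Fin k → Torus d) (i j : Fin k) :
    edgeProb γ M w x s(i, j) = connKernel γ (w i * w j / M) (x i) (x j) := rfl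

lemma edgeProb_natCast_mul (n : ℕ) (w : Fin k → ℝ) (x : Fin k → Torus d) (e : Sym2 (Fin k)) :
    edgeProb γ (n * M) w x e = edgeProb γ M (fun i => w i / √n) x e := by
  induction e with
  | _ i j => rw [edgeProb_mk, edgeProb_mk, div_mul_div_comm,
      Real.mul_self_sqrt (Nat.cast_nonneg n), div_div]

lemma measurable_edgeProb {X : Type*} [MeasurableSpace X] {w : X → Fin k → ℝ}
    {x : X → Fin k → Torus d} (hw : Measurable w) (hx : Measurable x) (e : Sym2 (Fin k)) :
    Measurable fun ω => edgeProb γ M (w ω) (x ω) e := by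
  induction e with
  | _ i j =>
    simp only [edgeProb_mk]
    fun_prop

lemma continuous_edgeProb (hγ : 0 ≤ γ) (x : Fin k → Torus d) (e : Sym2 (Fin k)) :
    Continuous fun w => edgeProb γ M w x e := by
  induction e with
  | _ i j => exact continuous_const.min (.rpow_const (by fun_prop) fun _ => .inr hγ)

/-- The probability that `k` vertices with weights `z.1` and positions `z.2` form the pattern
`H`. -/
def patternDensity (γ M : ℝ) (z : (Fin k → ℝ) × (Fin k → Torus d)) : ENNReal :=
  ∏ e, coinMeasure (acceptSet s H e (edgeProb γ M z.1 z.2 e))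

lemma patternDensity_natCast_mul (n : ℕ) (w : Fin k → ℝ) (x : Fin k → Torus d) :
    patternDensity s H γ (n * M) (w, x) = patternDensity s H γ M (fun i => w i / √n, x) :=
  prod_congr rfl fun e _ => by rw [edgeProb_natCast_mul]

@[fun_prop]
lemma measurable_patternDensity : Measurable (patternDensity (d := d) s H γ M) :=
  measurable_fun_prod _ fun e _ =>
    (continuous_coinMeasure_acceptSet s H e).measurable.comp
      (measurable_edgeProb measurable_fst measurable_snd e)

lemma continuous_patternDensity (hγ : 0 ≤ γ) (x : Fin k → Torus d) :
    Continuous fun w => patternDensity s H γ M (w, x) :=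
  continuous_iff_continuousAt.2 fun _ => ENNReal.tendsto_finsetProd_of_ne_top _
    (fun e _ => ((continuous_coinMeasure_acceptSet s H e).comp
      (continuous_edgeProb hγ x e)).continuousAt) fun _ _ => measure_ne_top _ _

lemma patternDensity_pos (hγ : 0 < γ) {w : Fin k → ℝ} (hw : ∀ i, 0 < w i) (hM : 0 < M)
    {x : Fin k → Torus d} (hx : ∀ i j, i ≠ j → w i * w j / M < dist (x i) (x j) ^ d) :
    0 < patternDensity s H γ M (w, x) := by
  refine CanonicallyOrderedAdd.prod_pos.2 fun e _ => coinMeasure_acceptSet_pos s H ?_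
  induction e with
  | _ i j =>
    intro hij
    have hw' : 0 < w i * w j / M := div_pos (mul_pos (hw i) (hw j)) hM
    have hx' := hx i j hij
    have hratio : 0 < w i * w j / M / dist (x i) (x j) ^ d := div_pos hw' (hw'.trans hx')
    exact ⟨lt_min one_pos (Real.rpow_pos_of_pos hratio γ), min_lt_of_right_lt
      (Real.rpow_lt_one hratio.le ((div_lt_one (hw'.trans hx')).2 hx') hγ)⟩

variable {H}

lemma patternDensity_le_prod_cycle [NeZero k] {σ : Equiv.Perm (Fin k)} (hk : 3 ≤ k)
    (hH : ∀ i, H.Adj (σ i) (σ (i + 1))) (w : Fin k → ℝ) (x : Fin k → Torus d) :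
    patternDensity s H γ M (w, x) ≤ ∏ i, ENNReal.ofReal
      (connKernel γ (w (σ i) * w (σ (i + 1)) / M) (x (σ i)) (x (σ (i + 1)))) := by
  rw [patternDensity, ← prod_mul_prod_compl (univ.image (cycleEdge σ)),
    prod_image fun a _ b _ h => cycleEdge_injective σ hk h]
  refine (mul_le_of_le_one_right' (prod_le_one' fun e _ => prob_le_one)).trans
    (prod_le_prod' fun i _ => ?_)
  rw [acceptSet, if_pos (show cycleEdge σ i ∈ H.edgeSet from hH i), coinMeasure_Iic]
  exact ENNReal.ofReal_le_ofReal (min_le_left _ _)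

lemma patternDensity_le_cycleMajorant [NeZero k] {σ : Equiv.Perm (Fin k)} (hk : 3 ≤ k)
    (hH : ∀ i, H.Adj (σ i) (σ (i + 1))) (hγ : 0 ≤ γ) (hM : 0 ≤ M) {a C : ℝ} {v w : Fin k → ℝ}
    (hw₀ : ∀ i, 0 ≤ w i) (hw : ∀ i, w i ≤ C * Real.exp (-a * v i)) (x : Fin k → Torus d) :
    patternDensity s H γ M (w, x) ≤ cycleMajorant σ γ a (C ^ 2 / M) (v, x) := by
  refine (patternDensity_le_prod_cycle s hk hH w x).trans
    (prod_le_prod' fun i _ => ENNReal.ofReal_le_ofReal (connKernel_mono hγ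
      (div_nonneg (mul_nonneg (hw₀ _) (hw₀ _)) hM) ?_))
  rw [div_mul_eq_mul_div]
  refine div_le_div_of_nonneg_right ?_ hM
  calc _ ≤ (C * Real.exp (-a * v (σ i))) * (C * Real.exp (-a * v (σ (i + 1)))) :=
        mul_le_mul (hw _) (hw _) (hw₀ _) ((hw₀ _).trans (hw _))
    _ = _ := by
        rw [cycleSum_apply, mul_add, Real.exp_add]
        ring

variable (H γ M)

/-- The event that the vertices of a GIRG on `k` vertices, with `n μ` replaced by `M`, form the
pattern `H`. -/
def patternEvent (d : ℕ) : Set (GirgΩ d k) :=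
  {ω | ∀ e, ω.2.2 e ∈ acceptSet s H e (edgeProb γ M ω.1 ω.2.1 e)}

lemma measurableSet_patternEvent (d : ℕ) : MeasurableSet (patternEvent s H γ M d) := by
  rw [patternEvent, Set.ofPred_forall]
  exact .iInter fun e => measurableSet_setOf_mem_acceptSet s H e
    ((measurable_pi_apply e).comp measurable_snd.snd)
    (measurable_edgeProb measurable_fst measurable_snd.fst e)

variable {M} {S : Set (Fin k → ℝ)}

lemma girgMeasure_patternEvent_inter (d : ℕ) (μ : Measure ℝ) [IsProbabilityMeasure μ]
    (hS : MeasurableSet S) :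
    girgMeasure μ d k (patternEvent s H γ M d ∩ Prod.fst ⁻¹' S) =
      ∫⁻ z, (Prod.fst ⁻¹' S).indicator (patternDensity (d := d) s H γ M) z
        ∂((Measure.pi fun _ => μ).prod (Measure.pi fun _ => volume)) := by
  have hE := (measurableSet_patternEvent s H γ M d).inter (measurable_fst hS)
  have hassoc := measurePreserving_prodAssoc (Measure.pi fun _ : Fin k => μ)
    (Measure.pi fun _ : Fin k => (volume : Measure (Torus d)))
    (Measure.pi fun _ : Sym2 (Fin k) => coinMeasure)
  rw [girgMeasure, ← hassoc.measure_preimage hE.nullMeasurableSet,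
    Measure.prod_apply (hassoc.measurable hE)]
  refine lintegral_congr fun z => ?_
  by_cases hz : z ∈ Prod.fst ⁻¹' S
  · rw [Set.indicator_of_mem hz, patternDensity, ← Measure.pi_pi]
    congr 1 with y
    simpa [patternEvent, MeasurableEquiv.prodAssoc] using fun _ => hz
  · rw [Set.indicator_of_notMem hz]
    refine (congrArg _ (Set.eq_empty_of_forall_notMem fun y hy => hz ?_)).trans measure_empty
    exact hy.2

end PatternEvent

section Limit

variable {k d : ℕ} {τ γ c M : ℝ} {μ : Measure ℝ} [IsProbabilityMeasure μ]

/-- The weights of `k` vertices, as a function of exponentially distributed coordinates `v i < L`;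
the shift `L` plays the role of `log (n ^ ((τ - 1) / 2))`. -/
def expWeights (μ : Measure ℝ) (L : ℝ) (v : Fin k → ℝ) : Fin k → ℝ :=
  fun i => tailQuantile μ (v i - L)

@[fun_prop]
lemma measurable_expWeights (L : ℝ) : Measurable (expWeights (k := k) μ L) :=
  measurable_pi_iff.2 fun i => (measurable_tailQuantile μ).comp (by fun_prop)

lemma map_expWeights (hμ : μ (Set.Iio 1) = 0) (L : ℝ) :
    ((Measure.pi fun _ : Fin k => expMeasure).restrict (Set.univ.pi fun _ => Set.Iio L)).map
        (expWeights μ L) =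
      ENNReal.ofReal (Real.exp L) ^ k • Measure.pi fun _ => μ := by
  have hfinite : IsFiniteMeasure (ENNReal.ofReal (Real.exp L) • μ) :=
    Measure.smul_finite μ ENNReal.ofReal_ne_top
  have hmap := map_tailQuantile hμ L
  have hmeas : Measurable fun v => tailQuantile μ (v - L) :=
    (measurable_tailQuantile μ).comp (measurable_id.sub_const L)
  have : IsFiniteMeasure ((expMeasure.restrict (Set.Iio L)).map fun v => tailQuantile μ (v - L)) :=
    hmap ▸ hfinite
  calc _ = Measure.pi fun _ : Fin k =>
        (expMeasure.restrict (Set.Iio L)).map fun v => tailQuantile μ (v - L) := by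
        rw [Measure.restrict_pi_pi]
        exact Measure.pi_map_pi fun _ => hmeas.aemeasurable
    _ = Measure.pi fun _ : Fin k => ENNReal.ofReal (Real.exp L) • μ := by rw [hmap]
    _ = _ := Measure.pi_eq fun A _ => by simp [Measure.pi_pi, prod_mul_distrib]

lemma lintegral_expWeights (hμ : μ (Set.Iio 1) = 0) {X : Type*} [MeasurableSpace X]
    (ν : Measure X) [SFinite ν] (L : ℝ) {F : (Fin k → ℝ) × X → ENNReal} (hF : Measurable F) :
    ENNReal.ofReal (Real.exp L) ^ k * ∫⁻ z, F z ∂((Measure.pi fun _ => μ).prod ν) =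
      ∫⁻ z in (Set.univ.pi fun _ => Set.Iio L) ×ˢ Set.univ, F (expWeights μ L z.1, z.2)
        ∂((Measure.pi fun _ => expMeasure).prod ν) := by
  have hw := measurable_expWeights (k := k) (μ := μ) L
  rw [← smul_eq_mul, ← lintegral_smul_measure, ← Measure.prod_smul_left, ← map_expWeights hμ,
    ← Measure.prod_restrict, Measure.restrict_univ]
  nth_rw 1 [← Measure.map_id (μ := ν)]
  rw [Measure.map_prod_map _ _ hw measurable_id, lintegral_map hF (hw.prodMap measurable_id)]
  rfl

lemma exp_mul_girgMeasure_patternEvent_inter (hμ : μ (Set.Iio 1) = 0) (s : StarKind)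
    (H : SimpleGraph (Fin k)) (L : ℝ) {S : Set (Fin k → ℝ)} (hS : MeasurableSet S) :
    ENNReal.ofReal (Real.exp L) ^ k * girgMeasure μ d k (patternEvent s H γ M d ∩ Prod.fst ⁻¹' S) =
      ∫⁻ z, {z | (∀ i, z.1 i < L) ∧ expWeights μ L z.1 ∈ S}.indicator
          (fun z => patternDensity s H γ M (expWeights μ L z.1, z.2)) z
        ∂((Measure.pi fun _ => expMeasure).prod
          (Measure.pi fun _ => (volume : Measure (Torus d)))) := by
  rw [girgMeasure_patternEvent_inter s H γ d μ hS, lintegral_expWeights hμ _ L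
    ((measurable_patternDensity s H).indicator (measurable_fst hS)),
    ← lintegral_indicator ((MeasurableSet.univ_pi fun _ => measurableSet_Iio).prod .univ)]
  refine lintegral_congr fun z => ?_
  classical
  simp only [Set.indicator_apply, Set.mem_prod, Set.mem_univ_pi, Set.mem_Iio, Set.mem_univ,
    and_true, Set.mem_preimage, Set.mem_ofPred_eq, ite_and]

/-- The logarithm of the inverse probability `n ^ ((τ - 1) / 2)` that a weight is of order `√n`. -/
def logScale (τ : ℝ) (n : ℕ) : ℝ := (τ - 1) / 2 * Real.log n

lemma exp_logScale {n : ℕ} (hn : 0 < n) : Real.exp (logScale τ n) = (n : ℝ) ^ ((τ - 1) / 2) := by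
  rw [logScale, Real.rpow_def_of_pos (Nat.cast_pos.2 hn), mul_comm]

lemma exp_inv_mul_logScale (hτ : 1 < τ) {n : ℕ} (hn : 0 < n) :
    Real.exp ((τ - 1)⁻¹ * logScale τ n) = √n := by
  have hτ' : τ - 1 ≠ 0 := (sub_pos.2 hτ).ne'
  rw [Real.sqrt_eq_rpow, Real.rpow_def_of_pos (Nat.cast_pos.2 hn), logScale]
  field_simp

lemma tendsto_logScale (hτ : 1 < τ) : Tendsto (logScale τ) atTop atTop :=
  (Real.tendsto_log_atTop.comp tendsto_natCast_atTop_atTop).const_mul_atTop (by linarith)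

lemma WeightTail.tendsto_expWeights_div_sqrt (hW : WeightTail τ c μ) (hτ : 1 < τ)
    (v : Fin k → ℝ) :
    Tendsto (fun n : ℕ => fun i => expWeights μ (logScale τ n) v i / √n) atTop
      (nhds fun i => c ^ (τ - 1)⁻¹ * Real.exp (-(τ - 1)⁻¹ * v i)) := by
  refine tendsto_pi_nhds.2 fun i => ?_
  have hshift : Tendsto (fun n : ℕ => v i - logScale τ n) atTop atBot :=
    tendsto_atBot_add_const_left _ _ (tendsto_neg_atTop_atBot.comp (tendsto_logScale hτ))
  refine (((hW.tendsto_tailQuantile hτ).comp hshift).mul_const _).congr' ?_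
  filter_upwards [eventually_gt_atTop 0] with n hn
  rw [Function.comp_apply, expWeights, ← exp_inv_mul_logScale hτ hn, mul_assoc, ← Real.exp_add,
    div_eq_mul_inv, ← Real.exp_neg]
  congr 2
  ring

variable (s : StarKind) (H : SimpleGraph (Fin k))

/-- The limit of `N^⋆(H) / n ^ (k (3 - τ) / 2)`, where `M` is the mean weight: the intensity of
copies of `H` on vertices with weights `√n c ^ (1 / (τ - 1)) e ^ (-v i / (τ - 1))`. -/
def patternConstant (d : ℕ) (τ γ c M : ℝ) : ENNReal :=
  ∫⁻ z, patternDensity s H γ M (fun i => c ^ (τ - 1)⁻¹ * Real.exp (-(τ - 1)⁻¹ * z.1 i), z.2)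
    ∂((Measure.pi fun _ => expMeasure).prod (Measure.pi fun _ => (volume : Measure (Torus d))))

instance : expMeasure.IsOpenPosMeasure :=
  (withDensity_absolutelyContinuous' (μ := volume) (by fun_prop) (ae_of_all _ fun v => by
    simp [Real.exp_pos]) : volume ≪ expMeasure).isOpenPosMeasure

lemma infinite_torus (hd : d ≠ 0) : Infinite (Torus d) := by
  have : NeZero d := ⟨hd⟩
  have : Infinite (AddCircle (1 : ℝ)) :=
    (AddCircle.equivIco (1 : ℝ) 0).infinite_iff.2 (Set.Ico_infinite (by norm_num)).to_subtype
  exact Pi.infinite_of_right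

lemma exists_log_weights_separated (hd : d ≠ 0) {a C : ℝ} (ha : 0 < a) :
    ∃ z : (Fin k → ℝ) × (Fin k → Torus d), ∀ i j, i ≠ j →
      C * Real.exp (-a * z.1 i) * (C * Real.exp (-a * z.1 j)) / M < dist (z.2 i) (z.2 j) ^ d := by
  have := infinite_torus hd
  let x : ℕ ↪ Torus d := Infinite.natEmbedding _
  have hlim : Tendsto (fun V => C * Real.exp (-a * V) * (C * Real.exp (-a * V)) / M) atTop
      (nhds 0) := by
    have hexp : Tendsto (fun V => C * Real.exp (-a * V)) atTop (nhds (C * 0)) :=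
      (Real.tendsto_exp_atBot.comp
        (tendsto_id.const_mul_atTop_of_neg (neg_lt_zero.2 ha))).const_mul C
    simpa using (hexp.mul hexp).div_const M
  have hev : ∀ᶠ V in atTop, ∀ i j : Fin k, i ≠ j →
      C * Real.exp (-a * V) * (C * Real.exp (-a * V)) / M < dist (x i) (x j) ^ d := by
    simp only [eventually_all]
    intro i j hij
    exact hlim.eventually_lt_const
      (pow_pos (dist_pos.2 fun h => hij (Fin.ext (x.injective h))) d)
  obtain ⟨V, hV⟩ := hev.exists
  exact ⟨(fun _ => V, fun i => x i), hV⟩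

lemma patternConstant_pos (hd : d ≠ 0) (hτ : 1 < τ) (hγ : 0 < γ) (hc : 0 < c) (hM : 0 < M) :
    0 < patternConstant s H d τ γ c M := by
  set a := (τ - 1)⁻¹
  have ha : 0 < a := inv_pos.2 (sub_pos.2 hτ)
  let U : Set ((Fin k → ℝ) × (Fin k → Torus d)) := {z | ∀ i j, i ≠ j →
    c ^ a * Real.exp (-a * z.1 i) * (c ^ a * Real.exp (-a * z.1 j)) / M
      < dist (z.2 i) (z.2 j) ^ d}
  have hU : IsOpen U := by
    simp only [U, Set.ofPred_forall]
    exact isOpen_iInter_of_finite fun i => isOpen_iInter_of_finite fun j =>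
      isOpen_iInter_of_finite fun _ => isOpen_lt (by fun_prop) (by fun_prop)
  rw [patternConstant, lintegral_pos_iff_support (by fun_prop)]
  refine (hU.measure_pos _ (exists_log_weights_separated hd ha)).trans_le
    (measure_mono fun z hz => ?_)
  exact (patternDensity_pos s H hγ
    (fun i => mul_pos (Real.rpow_pos_of_pos hc a) (Real.exp_pos _)) hM hz).ne'

lemma WeightTail.tendsto_patternDensity (hW : WeightTail τ c μ) (hτ : 1 < τ) (hγ : 0 ≤ γ)
    (v : Fin k → ℝ) (x : Fin k → Torus d) :
    Tendsto (fun n : ℕ => patternDensity s H γ (n * M) (expWeights μ (logScale τ n) v, x)) atTop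
      (nhds (patternDensity s H γ M
        (fun i => c ^ (τ - 1)⁻¹ * Real.exp (-(τ - 1)⁻¹ * v i), x))) := by
  simp only [patternDensity_natCast_mul]
  exact ((continuous_patternDensity s H hγ x).tendsto _).comp (hW.tendsto_expWeights_div_sqrt hτ v)

variable {H} [NeZero k] {σ : Equiv.Perm (Fin k)}

lemma patternConstant_lt_top (hk : 3 ≤ k) (hodd : Odd k) (hH : ∀ i, H.Adj (σ i) (σ (i + 1)))
    (hd : d ≠ 0) (hγ : 1 < γ) (hc : 0 < c) (hM : 0 < M)
    (hkτ : 1 / 2 < (τ - 1)⁻¹ * (((k : ℝ) - 1) / k)) :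
    patternConstant s H d τ γ c M < ⊤ := by
  have hc' : 0 < c ^ (τ - 1)⁻¹ := Real.rpow_pos_of_pos hc _
  refine (lintegral_mono fun z => ?_).trans_lt
    (lintegral_cycleMajorant_lt_top σ hd hγ (div_pos (pow_pos hc' 2) hM) hodd hkτ)
  exact patternDensity_le_cycleMajorant s hk hH (by linarith) hM.le
    (fun i => (mul_pos hc' (Real.exp_pos _)).le) (fun i => le_rfl) z.2

lemma WeightTail.exists_patternDensity_le (hW : WeightTail τ c μ) (hτ : 1 < τ) (hk : 3 ≤ k)
    (hH : ∀ i, H.Adj (σ i) (σ (i + 1))) (hγ : 0 ≤ γ) (hM : 0 < M) :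
    ∃ C, 0 < C ∧ ∀ n : ℕ, 0 < n → ∀ v : Fin k → ℝ, (∀ i, v i < logScale τ n) →
      ∀ x : Fin k → Torus d, patternDensity s H γ (n * M) (expWeights μ (logScale τ n) v, x) ≤
        cycleMajorant σ γ (τ - 1)⁻¹ C (v, x) := by
  obtain ⟨C, hC, hle⟩ := hW.exists_tailQuantile_le hτ
  refine ⟨C ^ 2 / M, div_pos (pow_pos hC 2) hM, fun n hn v hv x => ?_⟩
  rw [patternDensity_natCast_mul]
  refine patternDensity_le_cycleMajorant s hk hH hγ hM.le (fun i =>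
    div_nonneg (zero_le_one.trans (one_le_tailQuantile μ _)) (Real.sqrt_nonneg _)) (fun i => ?_) x
  rw [div_le_iff₀ (Real.sqrt_pos.2 (Nat.cast_pos.2 hn)), ← exp_inv_mul_logScale hτ hn, mul_assoc,
    ← Real.exp_add]
  exact (hle _ (sub_neg.2 (hv i))).trans_eq (by ring_nf)

lemma WeightTail.tendsto_girgMeasure_patternEvent (hW : WeightTail τ c μ) (hτ : 1 < τ)
    (hk : 3 ≤ k) (hodd : Odd k) (hH : ∀ i, H.Adj (σ i) (σ (i + 1))) (hd : d ≠ 0) (hγ : 1 < γ)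
    (hM : 0 < M) (hkτ : 1 / 2 < (τ - 1)⁻¹ * (((k : ℝ) - 1) / k)) {S : ℕ → Set (Fin k → ℝ)}
    (hS : ∀ n, MeasurableSet (S n))
    (hSτ : ∀ v, ∀ᶠ n in atTop, expWeights μ (logScale τ n) v ∈ S n) :
    Tendsto (fun n : ℕ => ENNReal.ofReal (Real.exp (logScale τ n)) ^ k *
        girgMeasure μ d k (patternEvent s H γ (n * M) d ∩ Prod.fst ⁻¹' S n)) atTop
      (nhds (patternConstant s H d τ γ c M)) := by
  obtain ⟨C, hC, hle⟩ := hW.exists_patternDensity_le s hτ hk hH (zero_le_one.trans hγ.le) hM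
  simp only [exp_mul_girgMeasure_patternEvent_inter hW.2.1 s H _ (hS _)]
  refine tendsto_lintegral_filter_of_dominated_convergence (cycleMajorant σ γ (τ - 1)⁻¹ C)
    (.of_forall fun n => ?_) ?_ (lintegral_cycleMajorant_lt_top σ hd hγ hC hodd hkτ).ne
    (ae_of_all _ fun z => ?_)
  · have hlt : MeasurableSet {z : (Fin k → ℝ) × (Fin k → Torus d) | ∀ i, z.1 i < logScale τ n} := by
      simp only [Set.ofPred_forall]
      exact .iInter fun i => measurableSet_lt (by fun_prop) measurable_const
    exact Measurable.indicator (by fun_prop) (hlt.inter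
      (((measurable_expWeights _).comp measurable_fst) (hS n)))
  · filter_upwards [eventually_gt_atTop 0] with n hn
    exact ae_of_all _ fun z => Set.indicator_apply_le fun hz => hle n hn z.1 hz.1 z.2
  · have hlt : ∀ᶠ n in atTop, ∀ i, z.1 i < logScale τ n :=
      eventually_all.2 fun i => (tendsto_logScale hτ).eventually_gt_atTop _
    refine (hW.tendsto_patternDensity s H hτ (zero_le_one.trans hγ.le) z.1 z.2).congr' ?_
    filter_upwards [hlt, hSτ z.1] with n hn hSn
    have hz : z ∈ {z : (Fin k → ℝ) × (Fin k → Torus d) | (∀ i, z.1 i < logScale τ n) ∧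
        expWeights μ (logScale τ n) z.1 ∈ S n} := ⟨hn, hSn⟩
    rw [Set.indicator_of_mem hz]

end Limit

section Counting

lemma measurePreserving_precomp_pair {ι ι' κ X : Type*} [Fintype ι] [Fintype ι'] [Fintype κ]
    [MeasurableSpace X] (ν : Measure X) [IsProbabilityMeasure ν] {f : ι → κ} {g : ι' → κ}
    (hfg : Function.Injective (Sum.elim f g)) :
    MeasurePreserving (fun x : κ → X => (fun i => x (f i), fun i => x (g i)))
      (Measure.pi fun _ => ν) ((Measure.pi fun _ => ν).prod (Measure.pi fun _ => ν)) :=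
  (measurePreserving_sumPiEquivProdPi (X := fun _ : ι ⊕ ι' => X) fun _ => ν).comp
    (measurePreserving_precomp ν hfg)

lemma measurePreserving_prodProdProdComm {A B C D : Type*} [MeasurableSpace A] [MeasurableSpace B]
    [MeasurableSpace C] [MeasurableSpace D] (a : Measure A) (b : Measure B) (c : Measure C)
    (d : Measure D) [SFinite a] [SFinite b] [SFinite c] [SFinite d] :
    MeasurePreserving (fun z : (A × B) × (C × D) => ((z.1.1, z.2.1), (z.1.2, z.2.2)))
      ((a.prod b).prod (c.prod d)) ((a.prod c).prod (b.prod d)) := by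
  have hswap : MeasurePreserving (fun z : B × (C × D) => (z.2.1, (z.1, z.2.2)))
      (b.prod (c.prod d)) (c.prod (b.prod d)) :=
    (measurePreserving_prodAssoc c b d).comp
      ((Measure.measurePreserving_swap.prod (.id d)).comp (measurePreserving_prodAssoc b c d).symm)
  exact (measurePreserving_prodAssoc a c (b.prod d)).symm.comp
    (((MeasurePreserving.id a).prod hswap).comp (measurePreserving_prodAssoc a b (c.prod d)))

lemma injective_sumElim_sym2_map {α β : Type*} {f g : α → β}
    (hfg : Function.Injective (Sum.elim f g)) :
    Function.Injective (Sum.elim (Sym2.map f) (Sym2.map g)) := by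
  rw [Sum.elim_injective] at hfg ⊢
  refine ⟨Sym2.map.injective hfg.1, Sym2.map.injective hfg.2.1, fun e e' h => ?_⟩
  induction e with
  | _ i j =>
    obtain ⟨a, -, ha⟩ := Sym2.mem_map.1 (h ▸ Sym2.mem_map.2 ⟨i, Sym2.mem_mk_left i j, rfl⟩)
    exact hfg.2.2 i a ha.symm

variable {d k n : ℕ}

/-- The GIRG induced on the vertices `v 0, …, v (k - 1)`, relabelled by `Fin k`. -/
def restrictTo (v : Fin k → Fin n) (ω : GirgΩ d n) : GirgΩ d k :=
  (fun i => ω.1 (v i), fun i => ω.2.1 (v i), fun e => ω.2.2 (Sym2.map v e))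

lemma measurePreserving_restrictTo (μ : Measure ℝ) [IsProbabilityMeasure μ] {v : Fin k → Fin n}
    (hv : Function.Injective v) :
    MeasurePreserving (restrictTo (d := d) v) (girgMeasure μ d n) (girgMeasure μ d k) :=
  (measurePreserving_precomp μ hv).prod ((measurePreserving_precomp volume hv).prod
    (measurePreserving_precomp coinMeasure (Sym2.map.injective hv)))

lemma measurePreserving_restrictTo_pair (μ : Measure ℝ) [IsProbabilityMeasure μ]
    {v v' : Fin k → Fin n} (hv : Function.Injective (Sum.elim v v')) :
    MeasurePreserving (fun ω => (restrictTo (d := d) v ω, restrictTo v' ω)) (girgMeasure μ d n)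
      ((girgMeasure μ d k).prod (girgMeasure μ d k)) :=
  (measurePreserving_prodProdProdComm _ _ _ _).comp ((measurePreserving_precomp_pair μ hv).prod
    ((measurePreserving_prodProdProdComm _ _ _ _).comp
      ((measurePreserving_precomp_pair volume hv).prod
        (measurePreserving_precomp_pair coinMeasure (injective_sumElim_sym2_map hv)))))

/-- The number of ordered `k`-tuples of distinct vertices whose induced GIRG lies in `B`. -/
def tupleCount (n : ℕ) (B : Set (GirgΩ d k)) (ω : GirgΩ d n) : ℝ :=
  ∑ v : Fin k ↪ Fin n, B.indicator 1 (restrictTo v ω)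

variable (s : StarKind) (H : SimpleGraph (Fin k)) (γ M : ℝ)

lemma girgEdge_iff {v : Fin k → Fin n} (hv : Function.Injective v) (ω : GirgΩ d n) (i j : Fin k) :
    girgEdge γ M d n ω (v i) (v j) ↔ i ≠ j ∧ (restrictTo v ω).2.2 s(i, j) ≤
      edgeProb γ (n * M) (restrictTo v ω).1 (restrictTo v ω).2.1 s(i, j) := by
  rw [girgEdge, hv.ne_iff, connProb, ← div_div]
  rfl

lemma restrictTo_mem_patternEvent_sub {v : Fin k → Fin n} (hv : Function.Injective v)
    (ω : GirgΩ d n) : restrictTo v ω ∈ patternEvent .sub H γ (n * M) d ↔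
      ∀ i j, H.Adj i j → girgEdge γ M d n ω (v i) (v j) := by
  simp only [girgEdge_iff γ M hv, patternEvent, Set.mem_ofPred_eq, Sym2.forall, acceptSet,
    SimpleGraph.mem_edgeSet]
  refine forall₂_congr fun i j => ?_
  by_cases hij : H.Adj i j
  · simp [hij, hij.ne]
  · simp [hij]

lemma restrictTo_mem_patternEvent_ind {v : Fin k → Fin n} (hv : Function.Injective v)
    (ω : GirgΩ d n) : restrictTo v ω ∈ patternEvent .ind H γ (n * M) d ↔
      ∀ i j, i ≠ j → (H.Adj i j ↔ girgEdge γ M d n ω (v i) (v j)) := by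
  simp only [girgEdge_iff γ M hv, patternEvent, Set.mem_ofPred_eq, Sym2.forall, acceptSet,
    SimpleGraph.mem_edgeSet, SimpleGraph.compl_adj]
  refine forall₂_congr fun i j => ?_
  by_cases hij : H.Adj i j
  · simp [hij, hij.ne]
  · by_cases hne : i = j <;> simp [hij, hne]

lemma starNTotal_eq_tupleCount (ω : GirgΩ d n) :
    (starNTotal s H γ M d n ω : ℝ) = tupleCount n (patternEvent s H γ (n * M) d) ω := by
  classical
  have himage : starNTotal s H γ M d n ω = Set.ncard ((fun v : Fin k ↪ Fin n => ⇑v) ''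
      {v | restrictTo v ω ∈ patternEvent s H γ (n * M) d}) := by
    cases s <;> refine congrArg Set.ncard (Set.ext fun v => ⟨fun hv => ⟨⟨v, hv.1⟩, ?_, rfl⟩, ?_⟩)
    · exact (restrictTo_mem_patternEvent_ind H γ M hv.1 ω).2 hv.2
    · rintro ⟨v, hv, rfl⟩
      exact ⟨v.injective, (restrictTo_mem_patternEvent_ind H γ M v.injective ω).1 hv⟩
    · exact (restrictTo_mem_patternEvent_sub H γ M hv.1 ω).2 hv.2
    · rintro ⟨v, hv, rfl⟩
      exact ⟨v.injective, (restrictTo_mem_patternEvent_sub H γ M v.injective ω).1 hv⟩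
  rw [himage, Set.ncard_image_of_injective _ DFunLike.coe_injective, Set.ncard_eq_toFinset_card',
    Set.toFinset_ofPred, card_filter, Nat.cast_sum]
  exact sum_congr rfl fun v _ => by simp [Set.indicator_apply]

end Counting

section Overlap

lemma measureReal_pi_setOf_forall_lt {ι κ : Type*} [Fintype ι] [Fintype κ] [DecidableEq κ]
    (μ : Measure ℝ) [IsProbabilityMeasure μ] (h : ℝ) (g : ι → κ) :
    (Measure.pi fun _ : κ => μ).real {w | ∀ i, h < w (g i)} =
      μ.real (Set.Ioi h) ^ #(univ.image g) := by
  have hset : {w : κ → ℝ | ∀ i, h < w (g i)} = Set.pi (univ.image g) fun _ => Set.Ioi h := by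
    ext w
    simp
  rw [hset, measureReal_def, Measure.pi_pi_finset, prod_const, ENNReal.toReal_pow, measureReal_def]

variable {ι κ : Type*} [Fintype ι] [DecidableEq ι] [Fintype κ] [DecidableEq κ] {p : ℝ}

lemma sum_pow_card_insert_le (hp : 0 ≤ p) (A : Finset κ) :
    ∑ u, p ^ #(insert u A) ≤ p ^ #A * (Fintype.card κ * p + #A) := by
  have hterm : ∀ u, p ^ #(insert u A) ≤ p ^ #A * (p + if u ∈ A then 1 else 0) := fun u => by
    split_ifs with hu
    · rw [insert_eq_of_mem hu]
      exact le_mul_of_one_le_right (pow_nonneg hp _) (le_add_of_nonneg_left hp)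
    · rw [card_insert_of_notMem hu, pow_succ, add_zero]
  refine (sum_le_sum fun u _ => hterm u).trans_eq ?_
  simp [← mul_sum, sum_add_distrib]

lemma sum_pow_card_image_fin_le (hp : 0 ≤ p) (r : ℕ) :
    ∑ g : Fin r → κ, p ^ #(univ.image g) ≤ (Fintype.card κ * p + r) ^ r := by
  induction r with
  | zero => simp
  | succ r ih =>
    have himage : ∀ (u : κ) (g : Fin r → κ),
        univ.image (Fin.consEquiv (fun _ => κ) (u, g)) = insert u (univ.image g) := fun u g => by
      ext y
      simp [Fin.consEquiv, Fin.exists_fin_succ, eq_comm]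
    have hcard : ∀ g : Fin r → κ, #(univ.image g) ≤ r := fun g =>
      card_image_le.trans_eq (card_fin r)
    calc ∑ g : Fin (r + 1) → κ, p ^ #(univ.image g)
        = ∑ g : Fin r → κ, ∑ u, p ^ #(insert u (univ.image g)) := by
          simp only [← (Fin.consEquiv fun _ : Fin (r + 1) => κ).sum_comp, himage,
            Fintype.sum_prod_type_right]
      _ ≤ ∑ g : Fin r → κ, p ^ #(univ.image g) * (Fintype.card κ * p + r) :=
          sum_le_sum fun g _ => (sum_pow_card_insert_le hp _).trans (by gcongr; exact hcard g)
      _ ≤ (Fintype.card κ * p + r) ^ r * (Fintype.card κ * p + r) := by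
          rw [← sum_mul]
          gcongr
      _ ≤ _ := by
          rw [← pow_succ]
          gcongr
          simp

lemma sum_pow_card_image_le (ι : Type*) [Fintype ι] [DecidableEq ι] (hp : 0 ≤ p) :
    ∑ g : ι → κ, p ^ #(univ.image g) ≤
      (Fintype.card κ * p + Fintype.card ι) ^ Fintype.card ι := by
  refine le_of_eq_of_le ?_ (sum_pow_card_image_fin_le hp (Fintype.card ι))
  refine Fintype.sum_equiv ((Fintype.equivFin ι).arrowCongr (.refl κ)) _ _ fun g => ?_
  congr 2
  ext y
  simp [(Fintype.equivFin ι).exists_congr_left]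

lemma sum_apply_eq_pow_card_image_le (hp : 0 ≤ p) {a b : ι} (hab : a ≠ b) :
    ∑ g : ι → κ with g a = g b, p ^ #(univ.image g) ≤
      (Fintype.card κ * p + Fintype.card ι) ^ (Fintype.card ι - 1) := by
  have hcard : Fintype.card {c // c ≠ b} = Fintype.card ι - 1 := by simp
  let restr : (ι → κ) → {c // c ≠ b} → κ := fun g c => g c
  have himage : ∀ g : ι → κ, g a = g b → univ.image g = univ.image (restr g) := fun g hg => by
    ext y
    simp only [mem_image, mem_univ, true_and]
    refine ⟨?_, fun ⟨c, hc⟩ => ⟨c, hc⟩⟩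
    rintro ⟨c, rfl⟩
    obtain rfl | hc := eq_or_ne c b
    · exact ⟨⟨a, hab⟩, hg⟩
    · exact ⟨⟨c, hc⟩, rfl⟩
  have hinj : Set.InjOn restr (univ.filter fun g : ι → κ => g a = g b) := fun g hg g' hg' h => by
    have heq : ∀ c, c ≠ b → g c = g' c := fun c hc => congrFun h ⟨c, hc⟩
    simp only [coe_filter, mem_univ, true_and, Set.mem_ofPred_eq] at hg hg'
    ext c
    obtain rfl | hc := eq_or_ne c b
    · rw [← hg, ← hg', heq a hab]
    · exact heq c hc
  calc _ = ∑ g : ι → κ with g a = g b, p ^ #(univ.image (restr g)) :=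
        sum_congr rfl fun g hg => by rw [himage g (mem_filter.1 hg).2]
    _ = ∑ g ∈ image restr {g : ι → κ | g a = g b}, p ^ #(univ.image g) :=
        (sum_image (f := fun g => p ^ #(univ.image g)) hinj).symm
    _ ≤ ∑ g : {c // c ≠ b} → κ, p ^ #(univ.image g) :=
        sum_le_univ_sum_of_nonneg fun g => pow_nonneg hp _
    _ ≤ _ := sum_pow_card_image_le _ hp
    _ ≤ _ := by
        rw [hcard]
        gcongr
        exact Nat.sub_le _ _

lemma sum_not_injective_pow_card_image_le (hp : 0 ≤ p) :
    ∑ g : ι → κ with ¬Function.Injective g, p ^ #(univ.image g) ≤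
      Fintype.card ι ^ 2 * (Fintype.card κ * p + Fintype.card ι) ^ (Fintype.card ι - 1) := by
  let F : (ι → κ) → ι × ι → ℝ := fun g z => if g z.1 = g z.2 then p ^ #(univ.image g) else 0
  have hF : ∀ g z, 0 ≤ F g z := fun g z => by
    dsimp only [F]
    positivity
  calc _ ≤ ∑ g : ι → κ with ¬Function.Injective g, ∑ z ∈ univ.offDiag, F g z := by
        refine sum_le_sum fun g hg => ?_
        obtain ⟨a, b, heq, hab⟩ := Function.not_injective_iff.1 (mem_filter.1 hg).2
        have hmem : (a, b) ∈ (univ : Finset ι).offDiag := by simpa using hab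
        exact (if_pos heq).ge.trans (single_le_sum (fun z _ => hF g z) hmem)
    _ ≤ ∑ g : ι → κ, ∑ z ∈ univ.offDiag, F g z :=
        sum_le_univ_sum_of_nonneg fun g => sum_nonneg fun z _ => hF g z
    _ = ∑ z ∈ univ.offDiag, ∑ g : ι → κ with g z.1 = g z.2, p ^ #(univ.image g) := by
        simp only [F, sum_comm (s := univ), sum_filter]
    _ ≤ #(univ : Finset ι).offDiag • _ := sum_le_card_nsmul _ _ _ fun z hz =>
        sum_apply_eq_pow_card_image_le hp (mem_offDiag.1 hz).2.2
    _ ≤ _ := by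
        rw [nsmul_eq_mul, offDiag_card, card_univ, ← sq]
        gcongr
        exact_mod_cast Nat.sub_le _ _

lemma sum_pow_card_image_sumElim_le {ι : Type*} [Fintype ι] (hp : 0 ≤ p) :
    ∑ z : (ι ↪ κ) × (ι ↪ κ) with ¬Function.Injective (Sum.elim z.1 z.2),
        p ^ #(univ.image (Sum.elim z.1 z.2)) ≤
      (2 * Fintype.card ι) ^ 2 *
        (Fintype.card κ * p + 2 * Fintype.card ι) ^ (2 * Fintype.card ι - 1) := by
  classical
  let glue : (ι ↪ κ) × (ι ↪ κ) → ι ⊕ ι → κ := fun z => Sum.elim z.1 z.2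
  have hglue : Function.Injective glue := fun z z' h =>
    Prod.ext (DFunLike.ext _ _ fun i => congrFun h (.inl i))
      (DFunLike.ext _ _ fun i => congrFun h (.inr i))
  have hsubset : image glue {z | ¬Function.Injective (glue z)} ⊆
      ({g | ¬Function.Injective g} : Finset (ι ⊕ ι → κ)) :=
    image_subset_iff.2 fun z hz => by simpa using hz
  calc _ = ∑ g ∈ image glue {z | ¬Function.Injective (glue z)}, p ^ #(univ.image g) :=
        (sum_image (f := fun g => p ^ #(univ.image g)) hglue.injOn).symm
    _ ≤ ∑ g : ι ⊕ ι → κ with ¬Function.Injective g, p ^ #(univ.image g) :=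
        sum_le_sum_of_subset_of_nonneg hsubset fun _ _ _ => pow_nonneg hp _
    _ ≤ _ := sum_not_injective_pow_card_image_le hp
    _ = _ := by simp [Fintype.card_sum, two_mul]

end Overlap

section SecondMoment

lemma integral_sum_indicator_one {Ω ι : Type*} [MeasurableSpace Ω] {P : Measure Ω}
    [IsFiniteMeasure P] [Fintype ι] {A : ι → Set Ω} (hA : ∀ i, MeasurableSet (A i)) :
    ∫ ω, ∑ i, (A i).indicator (1 : Ω → ℝ) ω ∂P = ∑ i, P.real (A i) :=
  (integral_finsetSum _ fun i _ => (integrable_const 1).indicator (hA i)).trans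
    (sum_congr rfl fun i _ => integral_indicator_one (hA i))

variable {d k n : ℕ} (μ : Measure ℝ) [IsProbabilityMeasure μ] {B : Set (GirgΩ d k)}

lemma tupleCount_mono {B' : Set (GirgΩ d k)} (hBB' : B ⊆ B') (ω : GirgΩ d n) :
    tupleCount n B ω ≤ tupleCount n B' ω :=
  sum_le_sum fun _ _ => Set.indicator_le_indicator_of_subset hBB' (fun _ => zero_le_one) _

lemma tupleCount_eq_sum_preimage (B : Set (GirgΩ d k)) (ω : GirgΩ d n) :
    tupleCount n B ω = ∑ v : Fin k ↪ Fin n, (restrictTo v ⁻¹' B).indicator 1 ω :=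
  rfl

lemma measurableSet_restrictTo_preimage (hB : MeasurableSet B) (v : Fin k ↪ Fin n) :
    MeasurableSet (restrictTo v ⁻¹' B) :=
  (measurePreserving_restrictTo (Measure.dirac 0) v.injective).measurable hB

lemma memLp_tupleCount (hB : MeasurableSet B) (p : ENNReal) :
    MemLp (tupleCount n B) p (girgMeasure μ d n) := by
  simp only [funext (tupleCount_eq_sum_preimage B)]
  exact memLp_finsetSum _ fun _ _ =>
    (memLp_const (1 : ℝ)).indicator (measurableSet_restrictTo_preimage hB _)

lemma integral_tupleCount (hB : MeasurableSet B) :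
    ∫ ω, tupleCount n B ω ∂girgMeasure μ d n =
      n.descFactorial k * (girgMeasure μ d k).real B := by
  have hpreimage : ∀ v : Fin k ↪ Fin n, (girgMeasure μ d n).real (restrictTo v ⁻¹' B) =
      (girgMeasure μ d k).real B := fun v =>
    (measurePreserving_restrictTo μ v.injective).measureReal_preimage hB.nullMeasurableSet
  simp only [tupleCount_eq_sum_preimage]
  rw [integral_sum_indicator_one (measurableSet_restrictTo_preimage hB)]
  simp [hpreimage, Fintype.card_embedding_eq]

lemma measureReal_restrictTo_inter_le (hB : MeasurableSet B) {h : ℝ}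
    (hBh : B ⊆ {ω | ∀ i, h < ω.1 i}) (v v' : Fin k ↪ Fin n) :
    (girgMeasure μ d n).real (restrictTo v ⁻¹' B ∩ restrictTo v' ⁻¹' B) ≤
      (girgMeasure μ d k).real B ^ 2 + if ¬Function.Injective (Sum.elim v v') then
        μ.real (Set.Ioi h) ^ #(univ.image (Sum.elim v v')) else 0 := by
  split_ifs with hv
  · have hprod := (measurePreserving_restrictTo_pair (d := d) μ hv).measureReal_preimage
      (hB.prod hB).nullMeasurableSet
    rw [measureReal_prod_prod, ← sq] at hprod
    exact (hprod.trans (add_zero _).symm).le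
  · have hsubset : restrictTo v ⁻¹' B ∩ restrictTo v' ⁻¹' B ⊆
        Prod.fst ⁻¹' {w : Fin n → ℝ | ∀ i, h < w (Sum.elim v v' i)} := by
      rintro ω ⟨hω, hω'⟩ (i | i)
      exacts [hBh hω i, hBh hω' i]
    have hweights : (girgMeasure μ d n).real
        (Prod.fst ⁻¹' {w : Fin n → ℝ | ∀ i, h < w (Sum.elim v v' i)}) =
        μ.real (Set.Ioi h) ^ #(univ.image (Sum.elim v v')) := by
      rw [← measureReal_pi_setOf_forall_lt]
      exact measurePreserving_fst.measureReal_preimage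
        (by simp only [Set.ofPred_forall]; measurability)
    exact (measureReal_mono hsubset).trans
      (hweights.le.trans (le_add_of_nonneg_left (sq_nonneg _)))

lemma integral_tupleCount_sq (hB : MeasurableSet B) :
    ∫ ω, tupleCount n B ω ^ 2 ∂girgMeasure μ d n = ∑ z : (Fin k ↪ Fin n) × (Fin k ↪ Fin n),
      (girgMeasure μ d n).real (restrictTo z.1 ⁻¹' B ∩ restrictTo z.2 ⁻¹' B) := by
  have hmeas (z : (Fin k ↪ Fin n) × (Fin k ↪ Fin n)) :
      MeasurableSet (restrictTo (d := d) z.1 ⁻¹' B ∩ restrictTo z.2 ⁻¹' B) :=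
    (measurableSet_restrictTo_preimage hB z.1).inter (measurableSet_restrictTo_preimage hB z.2)
  have hsq (ω : GirgΩ d n) : tupleCount n B ω ^ 2 = ∑ z : (Fin k ↪ Fin n) × (Fin k ↪ Fin n),
      (restrictTo z.1 ⁻¹' B ∩ restrictTo z.2 ⁻¹' B).indicator 1 ω := by
    simp_rw [Set.inter_indicator_one, Pi.mul_apply, sq, tupleCount_eq_sum_preimage,
      sum_mul_sum, Fintype.sum_prod_type]
  simp only [hsq]
  exact integral_sum_indicator_one hmeas

lemma integral_tupleCount_sq_le (hB : MeasurableSet B) {h : ℝ}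
    (hBh : B ⊆ {ω | ∀ i, h < ω.1 i}) :
    ∫ ω, tupleCount n B ω ^ 2 ∂girgMeasure μ d n ≤
      (∫ ω, tupleCount n B ω ∂girgMeasure μ d n) ^ 2 +
        (2 * k) ^ 2 * (n * μ.real (Set.Ioi h) + 2 * k) ^ (2 * k - 1) := by
  rw [integral_tupleCount_sq μ hB]
  refine (sum_le_sum fun z _ => measureReal_restrictTo_inter_le μ hB hBh z.1 z.2).trans ?_
  rw [sum_add_distrib, ← sum_filter, integral_tupleCount μ hB]
  have hoverlap := sum_pow_card_image_sumElim_le (ι := Fin k) (κ := Fin n)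
    (measureReal_nonneg (μ := μ) (s := Set.Ioi h))
  simp only [Fintype.card_fin] at hoverlap
  refine add_le_add (le_of_eq ?_) hoverlap
  simp only [sum_const, card_univ, Fintype.card_prod, Fintype.card_embedding_eq, Fintype.card_fin,
    nsmul_eq_mul, Nat.cast_mul]
  ring

end SecondMoment

section Convergence

lemma measureReal_lt_abs_sub_le {Ω : Type*} [MeasurableSpace Ω] {P : Measure Ω}
    [IsProbabilityMeasure P] {X Y : Ω → ℝ} (hYX : ∀ ω, Y ω ≤ X ω) (hX : Integrable X P)
    (hY : MemLp Y 2 P) (I : ℝ) {δ : ℝ} (hδ : 0 < δ) :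
    P.real {ω | δ < |X ω - I|} ≤
      (∫ ω, Y ω ^ 2 ∂P - 2 * I * ∫ ω, Y ω ∂P + I ^ 2) / (δ / 2) ^ 2 +
        (∫ ω, X ω ∂P - ∫ ω, Y ω ∂P) / (δ / 2) := by
  have hYint : Integrable Y P := hY.integrable one_le_two
  have hlin : Integrable (fun ω => 2 * I * Y ω) P := hYint.const_mul _
  have hquad : Integrable (fun ω => Y ω ^ 2 - 2 * I * Y ω) P := hY.integrable_sq.sub hlin
  have hexpand : (fun ω => (Y ω - I) ^ 2) = fun ω => Y ω ^ 2 - 2 * I * Y ω + I ^ 2 := by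
    ext ω
    ring
  have hvar : ∫ ω, (Y ω - I) ^ 2 ∂P = ∫ ω, Y ω ^ 2 ∂P - 2 * I * ∫ ω, Y ω ∂P + I ^ 2 := by
    rw [hexpand, integral_add hquad (integrable_const _), integral_sub hY.integrable_sq hlin,
      integral_const_mul]
    simp
  have hchebyshev : P.real {ω | (δ / 2) ^ 2 ≤ (Y ω - I) ^ 2} ≤
      (∫ ω, Y ω ^ 2 ∂P - 2 * I * ∫ ω, Y ω ∂P + I ^ 2) / (δ / 2) ^ 2 := by
    rw [← hvar, le_div_iff₀' (by positivity)]
    exact mul_meas_ge_le_integral_of_nonneg (ae_of_all P fun ω => sq_nonneg _)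
      (hexpand ▸ hquad.add (integrable_const _)) _
  have hmarkov : P.real {ω | δ / 2 ≤ X ω - Y ω} ≤
      (∫ ω, X ω ∂P - ∫ ω, Y ω ∂P) / (δ / 2) := by
    rw [← integral_sub hX hYint, le_div_iff₀' (half_pos hδ)]
    exact mul_meas_ge_le_integral_of_nonneg (ae_of_all P fun ω => sub_nonneg.2 (hYX ω))
      (hX.sub hYint) _
  have hsubset : {ω | δ < |X ω - I|} ⊆
      {ω | (δ / 2) ^ 2 ≤ (Y ω - I) ^ 2} ∪ {ω | δ / 2 ≤ X ω - Y ω} := by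
    intro ω (hω : δ < |X ω - I|)
    refine (le_or_gt (δ / 2) (X ω - Y ω)).elim .inr fun hgap => .inl ?_
    have htri : |X ω - I| ≤ |X ω - Y ω| + |Y ω - I| := abs_sub_le _ _ _
    rw [abs_of_nonneg (sub_nonneg.2 (hYX ω))] at htri
    have hfar : δ / 2 ≤ |Y ω - I| := by linarith
    exact (pow_le_pow_left₀ (half_pos hδ).le hfar 2).trans_eq (sq_abs _)
  exact (measureReal_mono hsubset).trans ((measureReal_union_le _ _).trans
    (add_le_add hchebyshev hmarkov))

lemma tendsto_measure_lt_abs_sub {ι : Type*} {l : Filter ι} {Ω : ι → Type*}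
    [∀ n, MeasurableSpace (Ω n)] {P : ∀ n, Measure (Ω n)} [∀ n, IsProbabilityMeasure (P n)]
    {X Y : ∀ n, Ω n → ℝ} (hYX : ∀ n ω, Y n ω ≤ X n ω) (hX : ∀ n, Integrable (X n) (P n))
    (hY : ∀ n, MemLp (Y n) 2 (P n)) {I : ℝ}
    (hEX : Tendsto (fun n => ∫ ω, X n ω ∂P n) l (nhds I))
    (hEY : Tendsto (fun n => ∫ ω, Y n ω ∂P n) l (nhds I)) {b : ι → ℝ}
    (hEYb : ∀ n, ∫ ω, Y n ω ^ 2 ∂P n ≤ b n) (hb : Tendsto b l (nhds (I ^ 2)))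
    {δ : ℝ} (hδ : 0 < δ) :
    Tendsto (fun n => P n {ω | δ < |X n ω - I|}) l (nhds 0) := by
  have hbound : Tendsto (fun n => (b n - 2 * I * ∫ ω, Y n ω ∂P n + I ^ 2) / (δ / 2) ^ 2 +
      (∫ ω, X n ω ∂P n - ∫ ω, Y n ω ∂P n) / (δ / 2)) l (nhds 0) := by
    have hlim := (((hb.sub (hEY.const_mul (2 * I))).add_const (I ^ 2)).div_const
      ((δ / 2) ^ 2)).add ((hEX.sub hEY).div_const (δ / 2))
    have hzero : (I ^ 2 - 2 * I * I + I ^ 2) / (δ / 2) ^ 2 + (I - I) / (δ / 2) = 0 := by ring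
    rwa [hzero] at hlim
  have hreal : Tendsto (fun n => (P n).real {ω | δ < |X n ω - I|}) l (nhds 0) := by
    refine squeeze_zero (fun n => measureReal_nonneg) (fun n => ?_) hbound
    refine (measureReal_lt_abs_sub_le (hYX n) (hX n) (hY n) I hδ).trans ?_
    gcongr
    exact hEYb n
  exact (ENNReal.tendsto_toReal_iff (fun n => measure_ne_top _ _) ENNReal.zero_ne_top).1 hreal

variable {k d : ℕ} {τ c : ℝ} {μ : Measure ℝ} [IsProbabilityMeasure μ]

lemma tendsto_integral_tupleCount_div {B : ℕ → Set (GirgΩ d k)} (hB : ∀ n, MeasurableSet (B n))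
    {I : ENNReal} (hI : I ≠ ⊤)
    (hBI : Tendsto (fun n => ENNReal.ofReal (Real.exp (logScale τ n)) ^ k *
      girgMeasure μ d k (B n)) atTop (nhds I)) :
    Tendsto (fun n : ℕ => (∫ ω, tupleCount n (B n) ω ∂girgMeasure μ d n) /
      (n : ℝ) ^ ((k : ℝ) * (3 - τ) / 2)) atTop (nhds I.toReal) := by
  have hcount : Tendsto (fun n : ℕ => (n.descFactorial k : ℝ) / (n : ℝ) ^ k) atTop (nhds 1) :=
    (Asymptotics.isEquivalent_iff_tendsto_one (by
      filter_upwards [eventually_gt_atTop 0] with n hn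
      positivity)).1 (isEquivalent_descFactorial k)
  have hlim := hcount.mul ((ENNReal.tendsto_toReal hI).comp hBI)
  rw [one_mul] at hlim
  refine hlim.congr' ?_
  filter_upwards [eventually_gt_atTop 0] with n hn
  have hn' : (0 : ℝ) < n := Nat.cast_pos.2 hn
  have hpow : (n : ℝ) ^ k = (n : ℝ) ^ ((k : ℝ) * (3 - τ) / 2) * Real.exp (logScale τ n) ^ k := by
    rw [exp_logScale hn, ← Real.rpow_mul_natCast hn'.le, ← Real.rpow_add hn', ← Real.rpow_natCast]
    ring_nf
  rw [integral_tupleCount μ (hB n), Function.comp_apply, ENNReal.toReal_mul, ENNReal.toReal_pow,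
    ENNReal.toReal_ofReal (Real.exp_pos _).le, hpow, ← measureReal_def]
  field_simp

/-- The weight vectors with all entries above `n ^ (1 / 2 - κ)`. Truncating to them does not affect
the expected pattern count asymptotically, and keeps overlapping tuples negligible. -/
def heavyWeights (k : ℕ) (κ : ℝ) (n : ℕ) : Set (Fin k → ℝ) :=
  {w | ∀ i, (n : ℝ) ^ (1 / 2 - κ) < w i}

lemma measurableSet_heavyWeights (κ : ℝ) (n : ℕ) : MeasurableSet (heavyWeights k κ n) := by
  simp only [heavyWeights, Set.ofPred_forall]
  exact .iInter fun i => measurableSet_lt measurable_const (measurable_pi_apply i)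

lemma tendsto_add_const_pow_div_rpow {f : ℕ → ℝ} {C a b e : ℝ} {m : ℕ} (hf0 : ∀ n, 0 ≤ f n)
    (hf : ∀ n : ℕ, 0 < n → f n ≤ C * (n : ℝ) ^ a) (ha : 0 ≤ a) (hb : 0 ≤ b)
    (hae : a * m < e) :
    Tendsto (fun n : ℕ => (f n + b) ^ m / (n : ℝ) ^ e) atTop (nhds 0) := by
  have hlim : Tendsto (fun n : ℕ => (C + b) ^ m * (n : ℝ) ^ (-(e - a * m))) atTop (nhds 0) := by
    simpa using ((tendsto_rpow_neg_atTop (sub_pos.2 hae)).comp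
      tendsto_natCast_atTop_atTop).const_mul ((C + b) ^ m)
  refine squeeze_zero' (.of_forall fun n => ?_) ?_ hlim
  · have := hf0 n
    positivity
  filter_upwards [eventually_gt_atTop 0] with n hn
  have hn0 : (0 : ℝ) < n := Nat.cast_pos.2 hn
  have hone : 1 ≤ (n : ℝ) ^ a := Real.one_le_rpow (Nat.one_le_cast.2 hn) ha
  have hbase : f n + b ≤ (C + b) * (n : ℝ) ^ a := by
    rw [add_mul]
    exact add_le_add (hf n hn) (le_mul_of_one_le_right hb hone)
  calc _ ≤ ((C + b) * (n : ℝ) ^ a) ^ m / (n : ℝ) ^ e := by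
        have := hf0 n
        gcongr
    _ = _ := by
        rw [mul_pow, mul_div_assoc, ← Real.rpow_mul_natCast hn0.le, ← Real.rpow_sub hn0, neg_sub]

namespace WeightTail

lemma eventually_expWeights_mem_heavyWeights (hW : WeightTail τ c μ) (hτ : 1 < τ) {κ : ℝ}
    (hκ : 0 < κ) (v : Fin k → ℝ) :
    ∀ᶠ n in atTop, expWeights μ (logScale τ n) v ∈ heavyWeights k κ n := by
  refine eventually_all.2 fun i => ?_
  have hweight := tendsto_pi_nhds.1 (hW.tendsto_expWeights_div_sqrt hτ v) i
  have hthreshold : Tendsto (fun n : ℕ => (n : ℝ) ^ (-κ)) atTop (nhds 0) :=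
    (tendsto_rpow_neg_atTop hκ).comp tendsto_natCast_atTop_atTop
  filter_upwards [hthreshold.eventually_lt hweight
    (mul_pos (Real.rpow_pos_of_pos hW.1 _) (Real.exp_pos _)), eventually_gt_atTop 0] with n hlt hn
  have hn' : (0 : ℝ) < n := Nat.cast_pos.2 hn
  rwa [lt_div_iff₀ (Real.sqrt_pos.2 hn'), Real.sqrt_eq_rpow, ← Real.rpow_add hn',
    neg_add_eq_sub] at hlt

lemma exists_mul_tail_le (hW : WeightTail τ c μ) (hτ : 1 ≤ τ) :
    ∃ C : ℝ, ∀ κ : ℝ, ∀ n : ℕ, 0 < n →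
      n * μ.real (Set.Ioi ((n : ℝ) ^ (1 / 2 - κ))) ≤
        C * (n : ℝ) ^ ((3 - τ) / 2 + κ * (τ - 1)) := by
  obtain ⟨C, -, htail⟩ := hW.exists_tail_le hτ
  refine ⟨C, fun κ n hn => ?_⟩
  have hn' : (0 : ℝ) < n := Nat.cast_pos.2 hn
  calc _ ≤ (n : ℝ) * (C * ((n : ℝ) ^ (1 / 2 - κ)) ^ (1 - τ)) := by
        gcongr
        exact htail _ (by positivity)
    _ = C * ((n : ℝ) ^ (1 : ℝ) * (n : ℝ) ^ ((1 / 2 - κ) * (1 - τ))) := by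
        rw [Real.rpow_one, Real.rpow_mul hn'.le, mul_left_comm]
    _ = _ := by
        rw [← Real.rpow_add hn']
        ring_nf

lemma exists_tendsto_overlap_bound [NeZero k] (hW : WeightTail τ c μ) (hτ : 1 < τ) (hτ' : τ < 3) :
    ∃ κ : ℝ, 0 < κ ∧ Tendsto (fun n : ℕ => (2 * k) ^ 2 *
      (n * μ.real (Set.Ioi ((n : ℝ) ^ (1 / 2 - κ))) + 2 * k) ^ (2 * k - 1) /
        ((n : ℝ) ^ ((k : ℝ) * (3 - τ) / 2)) ^ 2) atTop (nhds 0) := by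
  obtain ⟨C, htail⟩ := hW.exists_mul_tail_le hτ.le
  have hτ1 : 0 < τ - 1 := sub_pos.2 hτ
  have hτ3 : 0 < 3 - τ := sub_pos.2 hτ'
  have hk : (0 : ℝ) < k := Nat.cast_pos.2 (NeZero.pos k)
  have hk1 : ((2 * k - 1 : ℕ) : ℝ) = 2 * k - 1 := by
    have := NeZero.pos k
    push_cast [(by omega : 1 ≤ 2 * k)]
    rfl
  let κ := (3 - τ) / (4 * k) / (τ - 1)
  have hexponent : ((3 - τ) / 2 + κ * (τ - 1)) * (2 * k - 1 : ℕ) < k * (3 - τ) / 2 * 2 := by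
    have hgap : k * (3 - τ) / 2 * 2 - ((3 - τ) / 2 + κ * (τ - 1)) * (2 * k - 1) =
        (3 - τ) / (4 * k) := by
      simp only [κ]
      field_simp
      ring
    rw [hk1, ← sub_pos, hgap]
    positivity
  refine ⟨κ, by positivity, ?_⟩
  have hlim := (tendsto_add_const_pow_div_rpow (fun n => by positivity) (htail κ)
    (by positivity) (by positivity : (0 : ℝ) ≤ 2 * k) hexponent).const_mul
      ((2 * k : ℝ) ^ 2)
  rw [mul_zero] at hlim
  refine hlim.congr fun n => ?_
  rw [← Real.rpow_mul_natCast (Nat.cast_nonneg n), Nat.cast_ofNat, ← mul_div_assoc]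

variable {γ : ℝ} {H : SimpleGraph (Fin k)} [NeZero k] {σ : Equiv.Perm (Fin k)}

lemma tendsto_starNTotal_div (hW : WeightTail τ c μ) (hτ : 2 < τ) (hτ' : τ < 3) (hk : 3 ≤ k)
    (hodd : Odd k) (hH : ∀ i, H.Adj (σ i) (σ (i + 1))) (hd : d ≠ 0) (hγ : 1 < γ)
    (hkτ : 1 / 2 < (τ - 1)⁻¹ * (((k : ℝ) - 1) / k)) (s : StarKind) {δ : ℝ} (hδ : 0 < δ) :
    Tendsto (fun n : ℕ => girgMeasure μ d n
      {ω | δ < |(starNTotal s H γ (wMean μ) d n ω : ℝ) / (n : ℝ) ^ ((k : ℝ) * (3 - τ) / 2) -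
        (patternConstant s H d τ γ c (wMean μ)).toReal|}) atTop (nhds 0) := by
  have hτ1 : 1 < τ := by linarith
  have hM := hW.wMean_pos hτ
  have hfinite := (patternConstant_lt_top s hk hodd hH hd hγ hW.1 hM hkτ).ne
  obtain ⟨κ, hκ, hoverlap⟩ := hW.exists_tendsto_overlap_bound (k := k) hτ1 hτ'
  set A : ℕ → ℝ := fun n => (n : ℝ) ^ ((k : ℝ) * (3 - τ) / 2)
  have hA : ∀ n, 0 ≤ A n := fun n => by positivity
  let B : ℕ → Set (GirgΩ d k) := fun n => patternEvent s H γ (n * wMean μ) d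
  let T : ℕ → Set (GirgΩ d k) := fun n => B n ∩ Prod.fst ⁻¹' heavyWeights k κ n
  have hB : ∀ n, MeasurableSet (B n) := fun n => measurableSet_patternEvent s H γ _ d
  have hT : ∀ n, MeasurableSet (T n) := fun n =>
    (hB n).inter (measurable_fst (measurableSet_heavyWeights κ n))
  have hEB := tendsto_integral_tupleCount_div hB hfinite (by
    simpa using hW.tendsto_girgMeasure_patternEvent s hτ1 hk hodd hH hd hγ hM hkτ
      (fun _ => .univ) fun _ => .of_forall fun _ => Set.mem_univ _)
  have hET := tendsto_integral_tupleCount_div hT hfinite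
    (hW.tendsto_girgMeasure_patternEvent s hτ1 hk hodd hH hd hγ hM hkτ
      (measurableSet_heavyWeights κ) (hW.eventually_expWeights_mem_heavyWeights hτ1 hκ))
  have hsq : ∀ n : ℕ, ∫ ω, (tupleCount n (T n) ω / A n) ^ 2 ∂girgMeasure μ d n ≤
      ((∫ ω, tupleCount n (T n) ω ∂girgMeasure μ d n) / A n) ^ 2 + (2 * k) ^ 2 *
        (n * μ.real (Set.Ioi ((n : ℝ) ^ (1 / 2 - κ))) + 2 * k) ^ (2 * k - 1) / A n ^ 2 := by
    intro n
    simp only [div_pow, integral_div, ← add_div]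
    gcongr
    exact integral_tupleCount_sq_le μ (hT n) Set.inter_subset_right
  simp only [starNTotal_eq_tupleCount]
  exact tendsto_measure_lt_abs_sub
    (fun n ω => div_le_div_of_nonneg_right (tupleCount_mono Set.inter_subset_left ω) (hA n))
    (fun n => ((memLp_tupleCount μ (hB n) 1).integrable le_rfl).div_const _)
    (fun n => by simpa only [div_eq_inv_mul] using (memLp_tupleCount μ (hT n) 2).const_mul (A n)⁻¹)
    (by simpa only [integral_div] using hEB) (by simpa only [integral_div] using hET) hsq
    (by simpa using (hET.pow 2).add hoverlap) hδ

end WeightTail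

end Convergence

/-- Theorem `hamiltonian`(ii), non-geometric regime: for a
Hamiltonian pattern `H` of odd size `k > 2/(3-τ)`, the vector `(α,β) ≡ (1/2, 0)`
solves the optimization problem and `N^⋆(H)/n^{k(3-τ)/2}` converges in probability
to a positive constant. -/
theorem girg_hamiltonian_nongeometric_phase
    {k d : ℕ} [NeZero k] (hd : 1 ≤ d) (τ γ c : ℝ) (hτ : τ ∈ Set.Ioo (2:ℝ) 3) (hγ : 1 < γ)
    (μW : Measure ℝ) [IsProbabilityMeasure μW] (hW : WeightTail τ c μW)
    (H : SimpleGraph (Fin k)) (hH : IsHamiltonianPattern H)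
    (hk : 2 / (3 - τ) < (k : ℝ)) (hodd : Odd k) (s : StarKind) :
    starIsOptimal s τ γ d H (fun _ => 1 / 2) (fun _ _ => 0) ∧
    ∃ I : ℝ, 0 < I ∧ ∀ δ : ℝ, 0 < δ →
      Tendsto (fun n : ℕ => girgMeasure μW d n
          {ω | δ < |(starNTotal s H γ (wMean μW) d n ω : ℝ) /
                     (n : ℝ) ^ ((k : ℝ) * (3 - τ) / 2) - I|})
        atTop (nhds 0) := by
  obtain ⟨σ, hσ⟩ := hH
  obtain ⟨hτ2, hτ3⟩ := hτ
  have hτ1 : 1 < τ := one_lt_two.trans hτ2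
  have hd0 : d ≠ 0 := Nat.one_le_iff_ne_zero.1 hd
  have hkτ : 2 < k * (3 - τ) := (div_lt_iff₀ (sub_pos.2 hτ3)).1 hk
  have hk3 : 3 ≤ k := by
    have : (2 : ℝ) < k := by nlinarith
    exact_mod_cast this
  have hfinite : 1 / 2 < (τ - 1)⁻¹ * (((k : ℝ) - 1) / k) := by
    have hk0 : (0 : ℝ) < k := Nat.cast_pos.2 (NeZero.pos k)
    rw [inv_mul_eq_div, lt_div_iff₀ (sub_pos.2 hτ1), lt_div_iff₀ hk0]
    linarith
  have hM := hW.wMean_pos hτ2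
  have hpos := patternConstant_pos s H hd0 hτ1 (zero_lt_one.trans hγ) hW.1 hM
  have hlt := patternConstant_lt_top s hk3 hodd hσ hd0 hγ hW.1 hM hfinite
  exact ⟨starIsOptimal_half_zero hτ1 hτ3.le (by linarith) hk3 hkτ.le hσ s,
    (patternConstant s H d τ γ c (wMean μW)).toReal, ENNReal.toReal_pos hpos.ne' hlt.ne,
    fun δ hδ => hW.tendsto_starNTotal_div hτ2 hτ3 hk3 hodd hσ hd0 hγ hfinite s hδ⟩

end
end

section
/- Let T = (V_T, E_T) be a finite tree, and let (X_i)_{i ∈ V_T} be i.i.d. random variables, each uniformly distributed on the d-dimensional torus T^d = ℝ^d/ℤ^d. For each edge (i,j) ∈ E_T, let f_{ij} : [0,1/2] → ℝ be a bounded measurable function. Then E[ ∏_{(i,j) ∈ E_T} f_{ij}(‖X_i − X_j‖) ] = ∏_{(i,j) ∈ E_T} E[ f_{ij}(‖X_i − X_j‖) ]. -/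
open MeasureTheory Filter Finset

noncomputable section

/-!
Orienting the edges of a forest, the map sending a labelling `X : V → G` of the vertices to its
increments `X j - X i` along the edges is a group homomorphism. It is surjective: every edge is a
bridge, so shifting `X` by `g` on one side of the bridge changes the increment along that edge by
`g` and no other increment. A surjective homomorphism pushes an invariant probability measure to an
invariant probability measure, and such a measure is unique. Hence, if the labels are iid with
invariant law `μ`, then so are the increments.
-/

section InvariantProbability

variable {G H : Type*} [AddGroup G] [MeasurableSpace G] [MeasurableAdd G]
  [AddGroup H] [MeasurableSpace H] [MeasurableAdd₂ H] [MeasurableNeg H]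

lemma isAddLeftInvariant_eq_of_isProbabilityMeasure (μ ν : Measure H)
    [IsProbabilityMeasure μ] [IsProbabilityMeasure ν] [μ.IsAddLeftInvariant]
    [ν.IsAddLeftInvariant] : μ = ν := by
  simpa using measure_eq_sub_vadd μ ν (s := Set.univ) (by simp) (by simp)

lemma measurePreserving_addMonoidHom_of_surjective (μ : Measure G) (ν : Measure H)
    [IsProbabilityMeasure μ] [IsProbabilityMeasure ν] [μ.IsAddLeftInvariant]
    [ν.IsAddLeftInvariant] (φ : G →+ H) (hφ : Measurable φ) (hsurj : Function.Surjective φ) :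
    MeasurePreserving φ μ ν where
  measurable := hφ
  map_eq :=
    have := isAddLeftInvariant_map (μ := μ) φ.toAddHom hφ hsurj
    have := Measure.isProbabilityMeasure_map (μ := μ) hφ.aemeasurable
    isAddLeftInvariant_eq_of_isProbabilityMeasure _ _

end InvariantProbability

section Increments

variable {V ι G : Type*} [AddCommGroup G]

/-- The homomorphism sending a labelling `X` of the vertices to its increments `X j - X i` along a
family `e` of oriented edges `(i, j)`: the coboundary map of a graph, for a chosen orientation. -/
def increments (e : ι → V × V) : (V → G) →+ (ι → G) where
  toFun X a := X (e a).2 - X (e a).1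
  map_zero' := by ext; simp
  map_add' X Y := by ext; simp [add_sub_add_comm]

lemma increments_apply (e : ι → V × V) (X : V → G) (a : ι) :
    increments e X a = X (e a).2 - X (e a).1 := rfl

lemma measurable_increments [MeasurableSpace G] [MeasurableSub₂ G] (e : ι → V × V) :
    Measurable (increments e : (V → G) →+ (ι → G)) :=
  measurable_pi_lambda _ fun a => (measurable_pi_apply (e a).2).sub (measurable_pi_apply (e a).1)

/-- `e` lists distinct edges of `T`, each once and with a chosen orientation. -/
structure IsOrientedEdgeFamily (T : SimpleGraph V) (e : ι → V × V) : Prop where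
  adj (a : ι) : T.Adj (e a).1 (e a).2
  injective : Function.Injective fun a => s((e a).1, (e a).2)

lemma isOrientedEdgeFamily_of_fst_lt_snd [Preorder V] {T : SimpleGraph V} {e : ι → V × V}
    (he : Function.Injective e) (hlt : ∀ a, (e a).1 < (e a).2)
    (hadj : ∀ a, T.Adj (e a).1 (e a).2) : IsOrientedEdgeFamily T e where
  adj := hadj
  injective a b hab := by
    rcases Sym2.eq_iff.1 hab with ⟨hfst, hsnd⟩ | ⟨hfst, hsnd⟩
    · exact he (Prod.ext hfst hsnd)
    · exact absurd (hfst ▸ hsnd ▸ hlt a) (hlt b).not_gt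

variable {T : SimpleGraph V} {e : ι → V × V}

lemma exists_increments_eq_single [DecidableEq ι] (hT : T.IsAcyclic)
    (he : IsOrientedEdgeFamily T e) (a : ι) (g : G) :
    ∃ X : V → G, increments e X = Pi.single a g := by
  classical
  set T' := T.deleteEdges {s((e a).1, (e a).2)}
  have hbridge : ¬ T'.Reachable (e a).1 (e a).2 :=
    SimpleGraph.isBridge_iff.1 (SimpleGraph.isAcyclic_iff_forall_adj_isBridge.1 hT (he.adj a))
  refine ⟨fun v => if T'.Reachable (e a).1 v then 0 else g, funext fun b => ?_⟩
  obtain rfl | hba := eq_or_ne b a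
  · simp [increments_apply, hbridge]
  · have hb : T'.Adj (e b).1 (e b).2 := by
      simpa [T', SimpleGraph.deleteEdges_adj, he.adj b] using he.injective.ne hba
    have hside : T'.Reachable (e a).1 (e b).1 ↔ T'.Reachable (e a).1 (e b).2 :=
      ⟨fun h => h.trans hb.reachable, fun h => h.trans hb.symm.reachable⟩
    simp [increments_apply, hside, hba]

lemma increments_surjective [Finite ι] (hT : T.IsAcyclic) (he : IsOrientedEdgeFamily T e) :
    Function.Surjective (increments e : (V → G) →+ (ι → G)) := by
  classical
  exact fun Y => AddSubgroup.pi_mem_of_single_mem (H := (increments (G := G) e).range) Y fun a =>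
    exists_increments_eq_single hT he a (Y a)

variable [Fintype V] [MeasurableSpace G] [MeasurableAdd₂ G] [MeasurableNeg G]
  (μ : Measure G) [IsProbabilityMeasure μ] [μ.IsAddLeftInvariant]

lemma measurePreserving_increments [Fintype ι] (hT : T.IsAcyclic)
    (he : IsOrientedEdgeFamily T e) :
    MeasurePreserving (increments e) (Measure.pi fun _ : V => μ) (Measure.pi fun _ : ι => μ) :=
  measurePreserving_addMonoidHom_of_surjective _ _ _ (measurable_increments e)
    (increments_surjective hT he)

lemma measurePreserving_increments_apply [Finite ι] (hT : T.IsAcyclic)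
    (he : IsOrientedEdgeFamily T e) (a : ι) :
    MeasurePreserving (fun X => increments e X a) (Measure.pi fun _ : V => μ) μ :=
  have := Fintype.ofFinite ι
  (measurePreserving_eval (fun _ => μ) a).comp (measurePreserving_increments μ hT he)

lemma iIndepFun_increments [Finite ι] (hT : T.IsAcyclic) (he : IsOrientedEdgeFamily T e) :
    ProbabilityTheory.iIndepFun (fun a X => increments e X a) (Measure.pi fun _ : V => μ) := by
  have := Fintype.ofFinite ι
  have happly := measurePreserving_increments_apply μ hT he
  rw [ProbabilityTheory.iIndepFun_iff_map_fun_eq_pi_map fun a => (happly a).aemeasurable]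
  simpa only [(happly _).map_eq] using (measurePreserving_increments μ hT he).map_eq

variable {𝕜 : Type*} [RCLike 𝕜] [Fintype ι] {f : ι → G → 𝕜}

lemma integrable_prod_increments (hT : T.IsAcyclic) (he : IsOrientedEdgeFamily T e)
    (hf : ∀ a, Integrable (f a) μ) :
    Integrable (fun X => ∏ a, f a (increments e X a)) (Measure.pi fun _ : V => μ) :=
  (measurePreserving_increments μ hT he).integrable_comp_of_integrable
    (Integrable.fintype_prod hf)

lemma integral_prod_increments (hT : T.IsAcyclic) (he : IsOrientedEdgeFamily T e)
    (hf : ∀ a, AEStronglyMeasurable (f a) μ) :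
    ∫ X, ∏ a, f a (increments e X a) ∂(Measure.pi fun _ : V => μ) =
      ∏ a, ∫ X, f a (increments e X a) ∂(Measure.pi fun _ : V => μ) := by
  have happly := measurePreserving_increments_apply μ hT he
  exact (iIndepFun_increments μ hT he).integral_fun_prod_comp
    (fun a => (happly a).aemeasurable) fun a => by simpa only [(happly a).map_eq] using hf a

end Increments

lemma norm_pi_addCircle_le_half_period {ι : Type*} [Fintype ι] {p : ℝ} (hp : p ≠ 0)
    (x : ι → AddCircle p) : ‖x‖ ≤ |p| / 2 :=
  (pi_norm_le_iff_of_nonneg (by positivity)).2 fun _ => AddCircle.norm_le_half_period p hp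

instance isProbabilityMeasure_volume_addCircle_one :
    IsProbabilityMeasure (volume : Measure (AddCircle (1 : ℝ))) :=
  ⟨by simp [AddCircle.measure_univ]⟩

lemma Torus.integrable_comp_norm {d : ℕ} {f : ℝ → ℝ} (hf : Measurable f) {C : ℝ}
    (hC : ∀ y ∈ Set.Icc (0 : ℝ) (1 / 2), |f y| ≤ C) : Integrable fun x : Torus d => f ‖x‖ :=
  .of_bound (hf.comp measurable_norm).aestronglyMeasurable C <| ae_of_all _ fun x =>
    hC _ ⟨norm_nonneg x, by simpa using norm_pi_addCircle_le_half_period one_ne_zero x⟩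

theorem torus_tree_edges_independence_general {V G 𝕜 : Type*} [RCLike 𝕜] [Fintype V]
    [LinearOrder V] [AddCommGroup G] [MeasurableSpace G] [MeasurableAdd₂ G] [MeasurableNeg G]
    (μ : Measure G) [IsProbabilityMeasure μ] [μ.IsAddLeftInvariant]
    (T : SimpleGraph V) [DecidableRel T.Adj] (hT : T.IsAcyclic) (f : V → V → G → 𝕜)
    (hf : ∀ i j, T.Adj i j → Integrable (f i j) μ) :
    Integrable (fun X : V → G => ∏ p : V × V with p.1 < p.2 ∧ T.Adj p.1 p.2,
        f p.1 p.2 (X p.2 - X p.1)) (Measure.pi fun _ => μ) ∧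
      ∫ X : V → G, ∏ p : V × V with p.1 < p.2 ∧ T.Adj p.1 p.2, f p.1 p.2 (X p.2 - X p.1)
          ∂(Measure.pi fun _ => μ) =
        ∏ p : V × V with p.1 < p.2 ∧ T.Adj p.1 p.2,
          ∫ X : V → G, f p.1 p.2 (X p.2 - X p.1) ∂(Measure.pi fun _ => μ) := by
  set E := ({p : V × V | p.1 < p.2 ∧ T.Adj p.1 p.2} : Finset (V × V))
  have hmem (p : E) : p.1.1 < p.1.2 ∧ T.Adj p.1.1 p.1.2 := (mem_filter_univ p.1).1 p.2
  have hE : IsOrientedEdgeFamily T (Subtype.val : E → V × V) :=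
    isOrientedEdgeFamily_of_fst_lt_snd Subtype.val_injective (fun p => (hmem p).1)
      fun p => (hmem p).2
  have hfE (p : E) : Integrable (f p.1.1 p.1.2) μ := hf _ _ (hmem p).2
  simp_rw [← Finset.prod_coe_sort E]
  exact ⟨integrable_prod_increments μ hT hE hfE,
    integral_prod_increments μ hT hE fun p => (hfE p).aestronglyMeasurable⟩

open scoped Classical in
/-- Lemma `treeedgesindependence`: if `T` is a tree and the `X_i`
are iid uniform points of the torus, then the random variables
`f_{ij}(‖X_i - X_j‖)`, for `(i,j)` ranging over the edges of `T`, have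
expectation of product equal to product of expectations. -/
theorem torus_tree_edges_independence
    {k d : ℕ} (T : SimpleGraph (Fin k)) (hT : T.IsTree)
    (f : Fin k → Fin k → ℝ → ℝ)
    (hmeas : ∀ i j, Measurable (f i j))
    (hbdd : ∀ i j, ∃ C : ℝ, ∀ y ∈ Set.Icc (0:ℝ) (1/2), |f i j y| ≤ C) :
    (∫ X : Fin k → Torus d,
        ∏ p ∈ Finset.univ.filter (fun p : Fin k × Fin k => p.1 < p.2 ∧ T.Adj p.1 p.2),
          f p.1 p.2 (dist (X p.1) (X p.2))
        ∂(Measure.pi fun _ => (volume : Measure (Torus d)))) =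
      ∏ p ∈ Finset.univ.filter (fun p : Fin k × Fin k => p.1 < p.2 ∧ T.Adj p.1 p.2),
        ∫ X : Fin k → Torus d, f p.1 p.2 (dist (X p.1) (X p.2))
          ∂(Measure.pi fun _ => (volume : Measure (Torus d))) := by
  choose C hC using hbdd
  simpa only [dist_eq_norm'] using (torus_tree_edges_independence_general volume T hT.isAcyclic
    (fun i j x => f i j ‖x‖) fun i j _ => Torus.integrable_comp_norm (hmeas i j) (hC i j)).2

end
end
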